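/- arXiv:math/0405433 — 2 statements merged into one kernel-verified Lean document; each statement's English description precedes it below -/
import Mathlib

section
/- For any N-tuple of real numbers i₁,…,i_N ≥ 0 with i₁ + ⋯ + i_N = 1, the set Bad(i₁,…,i_N) ⊆ ℝ^N has Hausdorff dimension N. -/
open scoped ENNReal

/-- The distance from a real number to the nearest integer. -/
noncomputable def distToNearestInt (y : ℝ) : ℝ := |y - (round y : ℝ)|

/-- For a tuple of weights `i₁, …, i_N ≥ 0` with `i₁ + ⋯ + i_N = 1`, the set
`Bad(i₁, …, i_N)` of points `x ∈ ℝ^N` for which there exists `c > 0` such that for every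
integer `q ≥ 1` one has `max{‖q xᵣ‖^(1/iᵣ) : iᵣ > 0} > c / q`; components with `iᵣ = 0`
impose no condition. -/
def badWeighted {N : ℕ} (i : Fin N → ℝ) : Set (Fin N → ℝ) :=
  {x | ∃ c : ℝ, 0 < c ∧ ∀ q : ℕ, 0 < q →
    ∃ r : Fin N, 0 < i r ∧ c / (q : ℝ) < distToNearestInt ((q : ℝ) * x r) ^ (1 / i r)}

/-!
Put `R = 2 ^ m` and subdivide `ℝ ^ N` at level `n` into boxes whose side in direction `r` is about
`R ^ (-n (1 + iᵣ))`. A rational vector `p / q` with `q ≲ R ^ n` should be avoided by a neighborhood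
of about the size of a box of level `n + 1`. Since `∑ iᵣ ≥ 1`, the volume of a box of level `n` is
so small that, by the simplex lemma, all rational vectors with such a denominator that come close
to the box lie on one hyperplane, up to the coordinates of weight zero. As soon as `m` is large, the
neighborhood of a hyperplane meets at most half of the children of the box. Discarding those
children at each level leaves a Cantor-type subset of `Bad(i₁, …, i_N)`. At each level it loses at
most a factor `2` out of the `R ^ (N + ∑ iᵣ)` or so children, so its Hausdorff dimension tends to
`N` as `m → ∞`.
-/

section DyadicBoxes

open scoped Finset

variable {ι : Type*}

/-- The closed dyadic box in `ι → ℝ` with lower corner `u r / 2 ^ e r` and side length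
`2 ^ (-e r)` in direction `r`. The exponent may depend on the direction, since approximation with
weights calls for boxes that are not cubes. -/
def dyadicBox (e : ι → ℕ) (u : ι → ℤ) : Set (ι → ℝ) :=
  Set.Icc (fun r => u r / 2 ^ e r) (fun r => (u r + 1) / 2 ^ e r)

/-- The index of the box of exponents `e` that contains the box of exponents `e + f` and index
`v`. -/
def dyadicAncestor (f : ι → ℕ) (v : ι → ℤ) : ι → ℤ := fun r => v r / 2 ^ f r

lemma mem_dyadicBox {e : ι → ℕ} {u : ι → ℤ} {x : ι → ℝ} :
    x ∈ dyadicBox e u ↔ ∀ r, u r ≤ x r * 2 ^ e r ∧ x r * 2 ^ e r ≤ u r + 1 := by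
  simp only [dyadicBox, Set.mem_Icc, Pi.le_def, ← forall_and]
  refine forall_congr' fun r => ?_
  rw [div_le_iff₀ (by positivity), le_div_iff₀ (by positivity)]

lemma dyadicBox_nonempty (e : ι → ℕ) (u : ι → ℤ) : (dyadicBox e u).Nonempty :=
  Set.nonempty_Icc.mpr fun r => by dsimp only; gcongr; linarith

lemma dyadicBox_add_subset (e f : ι → ℕ) (v : ι → ℤ) :
    dyadicBox (e + f) v ⊆ dyadicBox e (dyadicAncestor f v) := by
  intro x hx
  rw [mem_dyadicBox] at hx ⊢
  intro r
  obtain ⟨hlow, hhigh⟩ := hx r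
  rw [Pi.add_apply, pow_add, ← mul_assoc] at hlow hhigh
  have hpos : (0 : ℝ) < 2 ^ f r := by positivity
  have hposZ : (0 : ℤ) < 2 ^ f r := by positivity
  obtain ⟨hdiv_low, hdiv_high⟩ :=
    (Int.ediv_eq_iff_of_pos hposZ).mp (rfl : v r / 2 ^ f r = dyadicAncestor f v r)
  constructor
  · refine le_of_mul_le_mul_right (le_trans ?_ hlow) hpos
    exact_mod_cast hdiv_low
  · refine le_of_mul_le_mul_right (hhigh.trans ?_) hpos
    rw [← add_one_mul] at hdiv_high
    exact_mod_cast Int.add_one_le_iff.mpr hdiv_high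

lemma dyadicAncestor_zero (v : ι → ℤ) : dyadicAncestor 0 v = v := by
  ext r
  simp [dyadicAncestor]

lemma dyadicAncestor_dyadicAncestor (f g : ι → ℕ) (v : ι → ℤ) :
    dyadicAncestor f (dyadicAncestor g v) = dyadicAncestor (g + f) v := by
  ext r
  simp only [dyadicAncestor, Pi.add_apply, pow_add]
  exact Int.ediv_ediv_of_nonneg (by positivity)

variable [Fintype ι] [DecidableEq ι]

/-- The indices of the boxes of exponents `e + f` into which the box of exponents `e` and index
`u` is subdivided. -/
noncomputable def dyadicChildren (f : ι → ℕ) (u : ι → ℤ) : Finset (ι → ℤ) :=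
  Fintype.piFinset fun r => Finset.Ico (u r * 2 ^ f r) ((u r + 1) * 2 ^ f r)

lemma mem_dyadicChildren {f : ι → ℕ} {u v : ι → ℤ} :
    v ∈ dyadicChildren f u ↔ dyadicAncestor f v = u := by
  simp only [dyadicChildren, Fintype.mem_piFinset, Finset.mem_Ico, funext_iff, dyadicAncestor]
  refine forall_congr' fun r => ?_
  rw [Int.ediv_eq_iff_of_pos (by positivity), add_one_mul]

lemma card_Ico_mul_two_pow (a : ℤ) (k : ℕ) :
    #(Finset.Ico (a * 2 ^ k) ((a + 1) * 2 ^ k)) = 2 ^ k := by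
  rw [Int.card_Ico, add_one_mul, add_sub_cancel_left]
  exact Int.toNat_natCast (2 ^ k)

lemma card_dyadicChildren (f : ι → ℕ) (u : ι → ℤ) :
    #(dyadicChildren f u) = 2 ^ ∑ r, f r := by
  simp only [dyadicChildren, Fintype.card_piFinset, card_Ico_mul_two_pow,
    Finset.prod_pow_eq_pow_sum]

end DyadicBoxes

section Counting

open scoped Finset

lemma card_Icc_ceil_floor_le {a b : ℝ} (h : a ≤ b + 1) :
    (#(Finset.Icc ⌈a⌉ ⌊b⌋) : ℝ) ≤ b - a + 1 := by
  have hcard : (#(Finset.Icc ⌈a⌉ ⌊b⌋) : ℤ) = max (⌊b⌋ + 1 - ⌈a⌉) 0 := by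
    rw [Int.card_Icc, Int.toNat_eq_max]
  have hcast : (#(Finset.Icc ⌈a⌉ ⌊b⌋) : ℝ) = max ((⌊b⌋ : ℝ) + 1 - ⌈a⌉) 0 := by exact_mod_cast hcard
  rw [hcast]
  exact max_le (by linarith [Int.floor_le b, Int.le_ceil a]) (by linarith)

lemma card_filter_abs_sub_le (S : Finset ℤ) (t : ℝ) (w : ℕ) :
    #{z ∈ S | |((z : ℤ) : ℝ) - t| ≤ w} ≤ 2 * w + 1 := by
  have hsub : {z ∈ S | |((z : ℤ) : ℝ) - t| ≤ w} ⊆ Finset.Icc ⌈t - w⌉ ⌊t + w⌋ := by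
    intro z hz
    have hz := abs_le.mp (Finset.mem_filter.mp hz).2
    rw [Finset.mem_Icc, Int.ceil_le, Int.le_floor]
    constructor <;> linarith
  have hIcc := card_Icc_ceil_floor_le (a := t - w) (b := t + w)
    (by linarith [w.cast_nonneg (α := ℝ)])
  refine (Finset.card_le_card hsub).trans ?_
  have : (#(Finset.Icc ⌈t - w⌉ ⌊t + w⌋) : ℝ) ≤ 2 * w + 1 := by linarith
  exact_mod_cast this

variable {ι : Type*} [Fintype ι] [DecidableEq ι]

lemma card_image_update_mul_le {X : ι → Type*} [∀ r, DecidableEq (X r)] {S : ∀ r, Finset (X r)}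
    {T : Finset (∀ r, X r)} (hT : T ⊆ Fintype.piFinset S) (r₀ : ι) (z : X r₀) :
    #(T.image (Function.update · r₀ z)) * #(S r₀) ≤ #(Fintype.piFinset S) := by
  have hsub : T.image (Function.update · r₀ z) ⊆
      Fintype.piFinset (Function.update S r₀ {z}) := by
    simp only [Finset.image_subset_iff, Fintype.mem_piFinset]
    intro v hv r
    rcases eq_or_ne r r₀ with rfl | hr
    · simp
    · simpa [hr] using Fintype.mem_piFinset.mp (hT hv) r
  have hprod : #(Fintype.piFinset (Function.update S r₀ {z})) =
      ∏ r ∈ Finset.univ.erase r₀, #(S r) := by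
    rw [Fintype.card_piFinset, ← Finset.mul_prod_erase _ _ (Finset.mem_univ r₀),
      Function.update_self, Finset.card_singleton, one_mul]
    refine Finset.prod_congr rfl fun r hr => ?_
    rw [Function.update_of_ne (Finset.ne_of_mem_erase hr)]
  calc #(T.image (Function.update · r₀ z)) * #(S r₀)
      ≤ (∏ r ∈ Finset.univ.erase r₀, #(S r)) * #(S r₀) :=
        Nat.mul_le_mul_right _ ((Finset.card_le_card hsub).trans hprod.le)
    _ = #(Fintype.piFinset S) := by
        rw [Fintype.card_piFinset, Finset.prod_erase_mul _ _ (Finset.mem_univ r₀)]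

lemma abs_sub_le_of_mem_slab {α : ι → ℝ} {β : ℝ} {w : ℕ} {r₀ : ι} (h₀ : α r₀ ≠ 0)
    (hmax : ∀ r, |α r| ≤ |α r₀|) {v : ι → ℤ}
    (hv : |∑ r, α r * v r - β| ≤ w * ∑ r, |α r|) :
    |(v r₀ : ℝ) - (β - ∑ r, α r * (Function.update v r₀ 0 r : ℤ)) / α r₀| ≤
      (w * Fintype.card ι : ℕ) := by
  have hsplit : ∑ r, α r * (v r : ℝ) =
      α r₀ * v r₀ + ∑ r, α r * (Function.update v r₀ 0 r : ℤ) := by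
    rw [← Finset.add_sum_erase _ _ (Finset.mem_univ r₀),
      ← Finset.add_sum_erase _ (fun r => α r * (Function.update v r₀ 0 r : ℤ))
        (Finset.mem_univ r₀)]
    simp only [Function.update_self, Int.cast_zero, mul_zero, zero_add]
    congr 1
    refine Finset.sum_congr rfl fun r hr => ?_
    rw [Function.update_of_ne (Finset.ne_of_mem_erase hr)]
  have hsum : ∑ r, |α r| ≤ Fintype.card ι * |α r₀| := by
    simpa using Finset.sum_le_sum fun r (_ : r ∈ Finset.univ) => hmax r
  refine le_of_mul_le_mul_left ?_ (abs_pos.mpr h₀)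
  calc |α r₀| * |(v r₀ : ℝ) - (β - ∑ r, α r * (Function.update v r₀ 0 r : ℤ)) / α r₀|
      = |∑ r, α r * v r - β| := by
        rw [← abs_mul, hsplit]
        congr 1
        field_simp
        ring
    _ ≤ w * ∑ r, |α r| := hv
    _ ≤ w * (Fintype.card ι * |α r₀|) := by gcongr
    _ = |α r₀| * (w * Fintype.card ι : ℕ) := by push_cast; ring

-- Once the other coordinates are fixed, the coordinate with the largest coefficient is confined
-- to an interval whose length does not depend on `α`.
lemma mul_card_filter_slab_le (S : ι → Finset ℤ) {α : ι → ℝ} {β : ℝ} (h : α ≠ 0 ∨ β ≠ 0)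
    (w n : ℕ) (hS : ∀ r, n * (2 * (w * Fintype.card ι) + 1) ≤ #(S r)) :
    n * #{v ∈ Fintype.piFinset S | |∑ r, α r * v r - β| ≤ w * ∑ r, |α r|} ≤
      #(Fintype.piFinset S) := by
  rcases eq_or_ne α 0 with rfl | hα
  · have hβ : β ≠ 0 := h.resolve_left fun h0 => h0 rfl
    simp [hβ]
  obtain ⟨r₁, hr₁⟩ := Function.ne_iff.mp hα
  have : Nonempty ι := ⟨r₁⟩
  obtain ⟨r₀, hmax⟩ := Finite.exists_max fun r => |α r|
  have h₀ : α r₀ ≠ 0 := abs_pos.mp ((abs_pos.mpr hr₁).trans_le (hmax r₁))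
  set T := {v ∈ Fintype.piFinset S | |∑ r, α r * v r - β| ≤ w * ∑ r, |α r|}
  have hfiber : #T ≤ (2 * (w * Fintype.card ι) + 1) * #(T.image (Function.update · r₀ 0)) := by
    refine Finset.card_le_mul_card_image _ _ fun y _ => ?_
    refine le_trans ?_ (card_filter_abs_sub_le (S r₀) ((β - ∑ r, α r * y r) / α r₀) _)
    refine Finset.card_le_card_of_injOn (fun v => v r₀) (fun v hv => ?_) fun v hv v' hv' hvv' => ?_
    · obtain ⟨hvT, rfl⟩ := Finset.mem_filter.mp hv
      obtain ⟨hvS, hv⟩ := Finset.mem_filter.mp hvT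
      exact Finset.mem_filter.mpr
        ⟨Fintype.mem_piFinset.mp hvS r₀, abs_sub_le_of_mem_slab h₀ hmax hv⟩
    · have heq := (Finset.mem_filter.mp hv).2.trans (Finset.mem_filter.mp hv').2.symm
      simpa using congrArg₂ (Function.update · r₀ ·) heq hvv'
  calc n * #T
      ≤ n * ((2 * (w * Fintype.card ι) + 1) * #(T.image (Function.update · r₀ 0))) := by gcongr
    _ = #(T.image (Function.update · r₀ 0)) * (n * (2 * (w * Fintype.card ι) + 1)) := by ring
    _ ≤ #(T.image (Function.update · r₀ 0)) * #(S r₀) := by gcongr; exact hS r₀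
    _ ≤ #(Fintype.piFinset S) := card_image_update_mul_le (Finset.filter_subset _ _) r₀ 0

end Counting

section Simplex

open scoped Nat Matrix Finset

variable {n : Type*} [Fintype n]

lemma exists_ne_zero_dotProduct_eq_zero_of_span_ne_top {K : Type*} [Field K] {V : Set (n → K)}
    (hV : Submodule.span K V ≠ ⊤) : ∃ a ≠ 0, ∀ v ∈ V, a ⬝ᵥ v = 0 := by
  classical
  obtain ⟨g, hg, hker⟩ := Submodule.exists_le_ker_of_lt_top _ (lt_top_iff_ne_top.mpr hV)
  refine ⟨(dotProductEquiv K n).symm g, by simpa using hg, fun v hv => ?_⟩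
  have hv : g v = 0 := hker (Submodule.subset_span hv)
  rwa [← (dotProductEquiv K n).apply_symm_apply g, dotProductEquiv_apply_apply] at hv

variable [DecidableEq n]

lemma exists_matrix_det_ne_zero_of_span_eq_top {K : Type*} [Field K] {V : Set (n → K)}
    (hV : Submodule.span K V = ⊤) : ∃ M : Matrix n n K, (∀ j, M j ∈ V) ∧ M.det ≠ 0 := by
  let b := Module.Basis.ofSpan hV.ge
  let σ := b.indexEquiv (Pi.basisFun K n)
  let M : Matrix n n K := fun j => b (σ.symm j)
  refine ⟨M, fun j => Module.Basis.ofSpan_subset hV.ge ⟨_, rfl⟩, ?_⟩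
  have hrow : LinearIndependent K M.row := b.linearIndependent.comp σ.symm σ.symm.injective
  rw [Matrix.linearIndependent_rows_iff_isUnit, Matrix.isUnit_iff_isUnit_det] at hrow
  exact hrow.ne_zero

lemma abs_det_le_factorial_mul_prod {A : Matrix n n ℝ} {w : n → ℝ} (hA : ∀ j c, |A j c| ≤ w c) :
    |A.det| ≤ (Fintype.card n)! * ∏ c, w c := by
  have hterm (σ : Equiv.Perm n) : |((σ.sign : ℤ) : ℝ) * ∏ c, A (σ c) c| ≤ ∏ c, w c := by
    have hsign : |((σ.sign : ℤ) : ℝ)| = 1 := by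
      rcases Int.units_eq_one_or σ.sign with h | h <;> simp [h]
    rw [abs_mul, hsign, one_mul, Finset.abs_prod]
    exact Finset.prod_le_prod (fun _ _ => abs_nonneg _) fun c _ => hA _ c
  calc |A.det| ≤ ∑ σ : Equiv.Perm n, |((σ.sign : ℤ) : ℝ) * ∏ c, A (σ c) c| := by
        rw [Matrix.det_apply']
        exact Finset.abs_sum_le_sum_abs _ _
    _ ≤ ∑ _σ : Equiv.Perm n, ∏ c, w c := Finset.sum_le_sum fun σ _ => hterm σ
    _ = (Fintype.card n)! * ∏ c, w c := by simp [Fintype.card_perm]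

-- If the integer points of the parallelepiped spanned the space, some of them would form a matrix
-- whose determinant is a nonzero integer, yet small.
lemma exists_ne_zero_dotProduct_eq_zero_of_lt_abs_det (T : Matrix n n ℝ) {w : n → ℝ}
    (hw : (Fintype.card n)! * ∏ c, w c < |T.det|) :
    ∃ a : n → ℝ, a ≠ 0 ∧ ∀ v : n → ℤ,
      (∀ c, |(T *ᵥ fun j => (v j : ℝ)) c| ≤ w c) → a ⬝ᵥ (fun j => (v j : ℝ)) = 0 := by
  set V : Set (n → ℝ) := (fun (v : n → ℤ) j => (v j : ℝ)) ''
    {v | ∀ c, |(T *ᵥ fun j => (v j : ℝ)) c| ≤ w c}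
  have hspan : Submodule.span ℝ V ≠ ⊤ := by
    intro hspan
    obtain ⟨M, hMV, hdet⟩ := exists_matrix_det_ne_zero_of_span_eq_top hspan
    choose Z hZ hZM using hMV
    have hM : M = (Matrix.of Z).map (Int.cast : ℤ → ℝ) := by
      ext j c
      exact (congrFun (hZM j) c).symm
    have hone : 1 ≤ |M.det| := by
      have hcast : M.det = ((Matrix.of Z).det : ℝ) := by
        rw [hM]; exact ((Int.castRingHom ℝ).map_det (Matrix.of Z)).symm
      rw [hcast] at hdet ⊢
      exact_mod_cast Int.one_le_abs (Int.cast_ne_zero.mp hdet)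
    have hle : |(M * Tᵀ).det| ≤ (Fintype.card n)! * ∏ c, w c := by
      refine abs_det_le_factorial_mul_prod fun j c => ?_
      have hentry : (M * Tᵀ) j c = (T *ᵥ fun k => (Z j k : ℝ)) c := by
        rw [hM, Matrix.mul_apply_eq_vecMul, Matrix.vecMul_transpose]
        rfl
      exact hentry ▸ hZ j c
    rw [Matrix.det_mul, Matrix.det_transpose, abs_mul] at hle
    exact absurd (le_mul_of_one_le_left (abs_nonneg T.det) hone) (hle.trans_lt hw).not_ge
  obtain ⟨a, ha, hVa⟩ := exists_ne_zero_dotProduct_eq_zero_of_span_ne_top hspan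
  exact ⟨a, ha, fun v hv => hVa _ ⟨v, hv, rfl⟩⟩

end Simplex

section Approximations

open scoped Nat Finset

variable {ι : Type*} [Fintype ι]

lemma exists_hyperplane_of_approximations (x w : ι → ℝ) (Q : ℝ)
    (hvol : (Fintype.card ι + 1)! * (Q * ∏ r, w r) < 1) :
    ∃ (a : ι → ℝ) (b : ℝ), (a ≠ 0 ∨ b ≠ 0) ∧ ∀ (p : ι → ℤ) (q : ℤ), |(q : ℝ)| ≤ Q →
      (∀ r, |q * x r - p r| ≤ w r) → ∑ r, a r * p r = b * q := by
  classical
  let T : Matrix (ι ⊕ Unit) (ι ⊕ Unit) ℝ :=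
    Matrix.fromBlocks (-1) (Matrix.of fun r _ => x r) 0 1
  have hT : |T.det| = 1 := by
    simp [T, Matrix.det_neg]
  obtain ⟨a, ha, hperp⟩ := exists_ne_zero_dotProduct_eq_zero_of_lt_abs_det T
    (w := Sum.elim w fun _ => Q) (by
      rw [hT]
      simpa [mul_comm Q] using hvol)
  refine ⟨fun r => a (.inl r), -a (.inr ()), ?_, fun p q hq hp => ?_⟩
  · contrapose! ha
    ext (r | _)
    · exact congrFun ha.1 r
    · exact neg_eq_zero.mp ha.2
  · have hzero := hperp (Sum.elim p fun _ => q) (by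
      rintro (r | _)
      · simpa [T, Matrix.fromBlocks_mulVec, Matrix.mulVec, dotProduct, Function.comp_def,
          mul_comm, neg_add_eq_sub, Matrix.one_apply, Matrix.neg_apply] using hp r
      · simpa [T, Matrix.fromBlocks_mulVec] using hq)
    simp only [dotProduct, Fintype.sum_sum_type, Finset.univ_unique, Finset.sum_singleton,
      Sum.elim_inl, Sum.elim_inr] at hzero
    linear_combination hzero

lemma exists_hyperplane_of_approximations_on (s : Finset ι) (x w : ι → ℝ) (Q : ℝ)
    (hvol : (#s + 1)! * (Q * ∏ r ∈ s, w r) < 1) :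
    ∃ (a : ι → ℝ) (b : ℝ), (∀ r ∉ s, a r = 0) ∧ (a ≠ 0 ∨ b ≠ 0) ∧
      ∀ (p : ι → ℤ) (q : ℤ), |(q : ℝ)| ≤ Q →
        (∀ r ∈ s, |q * x r - p r| ≤ w r) → ∑ r, a r * p r = b * q := by
  classical
  obtain ⟨a, b, hab, hplane⟩ := exists_hyperplane_of_approximations (ι := s) (fun r => x r)
    (fun r => w r) Q (by rwa [Fintype.card_coe, Finset.prod_coe_sort s w])
  refine ⟨fun r => if h : r ∈ s then a ⟨r, h⟩ else 0, b, fun r hr => dif_neg hr, ?_,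
    fun p q hq hp => ?_⟩
  · refine hab.imp_left fun ha h0 => ha (funext fun r => ?_)
    simpa using congrFun h0 r
  · rw [← hplane (fun r => p r) q hq fun r => hp r r.2,
      ← Finset.sum_subset s.subset_univ fun r _ hr => by simp [hr], ← Finset.sum_coe_sort]
    simp

end Approximations

section OneScale

open scoped Nat Finset

variable {ι : Type*}

lemma abs_mul_corner_sub_le {e : ι → ℕ} {u : ι → ℤ} {x : ι → ℝ} (hx : x ∈ dyadicBox e u) {r : ι}
    {q p : ℝ} (hq : 0 ≤ q) (hp : |q * x r - p| ≤ q / 2 ^ e r) :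
    |q * (u r / 2 ^ e r) - p| ≤ 2 * q / 2 ^ e r := by
  have hcorner : |u r / 2 ^ e r - x r| ≤ 1 / 2 ^ e r := by
    have hlow := hx.1 r
    have hhigh := hx.2 r
    dsimp only at hlow hhigh
    rw [add_div] at hhigh
    rw [abs_le]
    constructor <;> linarith [show (0 : ℝ) ≤ 1 / 2 ^ e r by positivity]
  calc |q * (u r / 2 ^ e r) - p| = |q * (u r / 2 ^ e r - x r) + (q * x r - p)| := by ring_nf
    _ ≤ q * |u r / 2 ^ e r - x r| + |q * x r - p| := by
        refine (abs_add_le _ _).trans_eq ?_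
        rw [abs_mul, abs_of_nonneg hq]
    _ ≤ q * (1 / 2 ^ e r) + q / 2 ^ e r := by gcongr
    _ = 2 * q / 2 ^ e r := by ring

variable [Fintype ι]

lemma abs_sum_corner_sub_le {e : ι → ℕ} {u : ι → ℤ} {x : ι → ℝ} (hx : x ∈ dyadicBox e u)
    {s : Finset ι} {a : ι → ℝ} {b : ℝ} (ha : ∀ r ∉ s, a r = 0) {p : ι → ℤ} {q : ℝ} (hq : 0 < q)
    (hp : ∀ r ∈ s, |q * x r - p r| ≤ q / 2 ^ e r) (hplane : ∑ r, a r * p r = b * q) :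
    |∑ r, a r / 2 ^ e r * u r - b| ≤ 2 * ∑ r, |a r / 2 ^ e r| := by
  refine le_of_mul_le_mul_left ?_ hq
  calc q * |∑ r, a r / 2 ^ e r * u r - b|
      = |∑ r, a r * (q * (u r / 2 ^ e r) - p r)| := by
        rw [← abs_of_pos hq, ← abs_mul, abs_of_pos hq, mul_sub, mul_comm q b, ← hplane,
          Finset.mul_sum, ← Finset.sum_sub_distrib]
        congr 1
        exact Finset.sum_congr rfl fun r _ => by ring
    _ ≤ ∑ r, |a r| * (2 * q / 2 ^ e r) := by
        refine (Finset.abs_sum_le_sum_abs _ _).trans (Finset.sum_le_sum fun r _ => ?_)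
        rw [abs_mul]
        by_cases hr : r ∈ s
        · gcongr
          exact abs_mul_corner_sub_le hx hq.le (hp r hr)
        · simp [ha r hr]
    _ = q * (2 * ∑ r, |a r / 2 ^ e r|) := by
        simp only [Finset.mul_sum, abs_div, abs_pow, Nat.abs_ofNat]
        exact Finset.sum_congr rfl fun r _ => by ring

variable [DecidableEq ι]

-- By the simplex lemma the approximations made from the box `u` lie on one hyperplane; the
-- children to be discarded are those which its neighborhood meets.
lemma exists_dyadicChildren_avoiding_approximations (s : Finset ι) (e f : ι → ℕ) (u : ι → ℤ)
    (Q : ℝ) (hf : ∀ r, 2 * (2 * (2 * Fintype.card ι) + 1) ≤ 2 ^ f r)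
    (hvol : (#s + 1)! * (Q * ∏ r ∈ s, 2 * Q / 2 ^ e r) < 1) :
    ∃ G ⊆ dyadicChildren f u, #(dyadicChildren f u) ≤ 2 * #G ∧
      ∀ v ∈ G, ∀ x ∈ dyadicBox (e + f) v, ∀ q : ℕ, 0 < q → q ≤ Q →
        ∃ r ∈ s, q / 2 ^ (e + f) r < distToNearestInt (q * x r) := by
  obtain ⟨a, b, ha, hab, hplane⟩ := exists_hyperplane_of_approximations_on s
    (fun r => u r / 2 ^ e r) (fun r => 2 * Q / 2 ^ e r) Q hvol
  set α : ι → ℝ := fun r => a r / 2 ^ (e + f) r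
  have hαb : α ≠ 0 ∨ b ≠ 0 := by
    refine hab.imp_left fun h hα => h (funext fun r => ?_)
    simpa [α] using congrFun hα r
  set slab : (ι → ℤ) → Prop := fun v => |∑ r, α r * v r - b| ≤ (2 : ℕ) * ∑ r, |α r| with hslab
  classical
  have hcount : 2 * #{v ∈ dyadicChildren f u | slab v} ≤ #(dyadicChildren f u) :=
    mul_card_filter_slab_le _ hαb 2 2 fun r => (hf r).trans_eq (card_Ico_mul_two_pow _ _).symm
  refine ⟨{v ∈ dyadicChildren f u | ¬ slab v}, Finset.filter_subset _ _, ?_, ?_⟩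
  · have := Finset.card_filter_add_card_filter_not (s := dyadicChildren f u) slab
    lia
  intro v hv x hx q hq hqQ
  obtain ⟨hvu, hv⟩ := Finset.mem_filter.mp hv
  have hxu : x ∈ dyadicBox e u := mem_dyadicChildren.mp hvu ▸ dyadicBox_add_subset e f v hx
  contrapose! hv with hclose
  have hq : (0 : ℝ) < q := Nat.cast_pos.mpr hq
  rw [hslab, Nat.cast_ofNat]
  refine abs_sum_corner_sub_le hx ha hq hclose (hplane (fun r => round (q * x r)) q ?_ ?_)
  · simpa using hqQ
  · intro r hr
    have hparent : |q * x r - round (q * x r)| ≤ q / 2 ^ e r :=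
      (hclose r hr).trans (by gcongr <;> simp)
    refine (abs_mul_corner_sub_le hxu hq.le hparent).trans ?_
    gcongr

end OneScale

section Branches

open scoped Finset

lemma exists_branch_lt {A M : Type*} [AddCommMonoid M] [LinearOrder M] [IsOrderedAddMonoid M]
    (G : ℕ → A → Finset A) {g : ℕ → M} {Ψ : ℕ → A → M}
    (hg : ∀ n u, g n ≤ #(G n u) • g (n + 1)) (hΨ : ∀ n u, ∑ v ∈ G n u, Ψ (n + 1) v ≤ Ψ n u)
    {u₀ : A} (h₀ : Ψ 0 u₀ < g 0) :
    ∃ u : ℕ → A, (∀ n, u (n + 1) ∈ G n (u n)) ∧ ∀ n, Ψ n (u n) < g n := by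
  have hnext (n : ℕ) (u : A) (hu : Ψ n u < g n) : ∃ v ∈ G n u, Ψ (n + 1) v < g (n + 1) := by
    refine Finset.exists_lt_of_sum_lt ?_
    rw [Finset.sum_const]
    exact (hΨ n u).trans_lt (hu.trans_le (hg n u))
  have : Nonempty A := ⟨u₀⟩
  choose! next hmem hlt using hnext
  let u : ℕ → A := fun n => n.rec u₀ next
  have hu (n : ℕ) : Ψ n (u n) < g n := by
    induction n with
    | zero => exact h₀
    | succ n ih => exact hlt n (u n) ih
  exact ⟨u, fun n => hmem n (u n) (hu n), hu⟩

variable {ι : Type*} [Fintype ι] [DecidableEq ι]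

/-- The Cantor-type set of the points lying in an infinite descending sequence of dyadic boxes, the
one at level `n` having exponents `e n` and the indices `G n u` being the children kept when the
box of index `u` at level `n` is subdivided. -/
def branchSet (e : ℕ → ι → ℕ) (G : ℕ → (ι → ℤ) → Finset (ι → ℤ)) : Set (ι → ℝ) :=
  {x | ∃ u : ℕ → ι → ℤ, (∀ n, u (n + 1) ∈ G n (u n)) ∧ ∀ n, x ∈ dyadicBox (e n) (u n)}

variable {e : ℕ → ι → ℕ} {G : ℕ → (ι → ℤ) → Finset (ι → ℤ)}

lemma exists_mem_branch_boxes (he : Monotone e)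
    (hG : ∀ n u, G n u ⊆ dyadicChildren (e (n + 1) - e n) u) {u : ℕ → ι → ℤ}
    (hu : ∀ n, u (n + 1) ∈ G n (u n)) : ∃ x, ∀ n, x ∈ dyadicBox (e n) (u n) := by
  simp only [← Set.mem_iInter]
  refine IsCompact.nonempty_iInter_of_sequence_nonempty_isCompact_isClosed _ (fun n => ?_)
    (fun n => dyadicBox_nonempty _ _) isCompact_Icc fun n => isClosed_Icc
  have hsub := dyadicBox_add_subset (e n) (e (n + 1) - e n) (u (n + 1))
  rwa [add_tsub_cancel_of_le (he n.le_succ), mem_dyadicChildren.mp (hG n _ (hu n))] at hsub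

-- The weight of an index is the total mass of the boxes still to be avoided below it; some child
-- always keeps this weight smaller than its own mass.
lemma exists_branch_avoiding (he : Monotone e)
    (hG : ∀ n u, G n u ⊆ dyadicChildren (e (n + 1) - e n) u) {g : ℕ → ℝ≥0∞}
    (hg : ∀ n u, g n ≤ #(G n u) • g (n + 1)) {J : Type*} (κ : J → ℕ) (D : J → ι → ℤ)
    (hκ : ∑' j, g (κ j) < g 0) :
    ∃ u : ℕ → ι → ℤ, (∀ n, u (n + 1) ∈ G n (u n)) ∧ ∀ j, u (κ j) ≠ D j := by
  let Ψ (n : ℕ) (u : ι → ℤ) : ℝ≥0∞ :=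
    ∑' j, if n ≤ κ j ∧ dyadicAncestor (e (κ j) - e n) (D j) = u then g (κ j) else 0
  have hΨ (n : ℕ) (u : ι → ℤ) : ∑ v ∈ G n u, Ψ (n + 1) v ≤ Ψ n u := by
    rw [← Summable.tsum_finsetSum fun _ _ => ENNReal.summable]
    refine ENNReal.tsum_le_tsum fun j => ?_
    by_cases hj : n + 1 ≤ κ j ∧ dyadicAncestor (e (κ j) - e (n + 1)) (D j) ∈ G n u
    · obtain ⟨hn, hmem⟩ := hj
      have hanc : dyadicAncestor (e (κ j) - e n) (D j) = u := by
        rw [← mem_dyadicChildren.mp (hG n u hmem), dyadicAncestor_dyadicAncestor,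
          tsub_add_tsub_cancel (he hn) (he n.le_succ)]
      simp [hn, hmem, hanc, n.le_succ.trans hn]
    · refine le_of_eq_of_le (Finset.sum_eq_zero fun v hv => if_neg ?_) zero_le
      rintro ⟨hn, rfl⟩
      exact hj ⟨hn, hv⟩
  have hΨ₀ : Ψ 0 0 < g 0 := by
    refine lt_of_le_of_lt (ENNReal.tsum_le_tsum fun j => ?_) hκ
    split_ifs <;> simp
  obtain ⟨u, hu, hlt⟩ := exists_branch_lt G hg hΨ hΨ₀
  refine ⟨u, hu, fun j hj => (hlt (κ j)).not_ge ?_⟩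
  refine le_trans ?_ (ENNReal.le_tsum j)
  simp [hj, dyadicAncestor_zero]

end Branches

section HausdorffMeasure

open MeasureTheory Metric
open scoped Finset

lemma exists_cover_of_hausdorffMeasure_eq_zero {X : Type*} [EMetricSpace X] [MeasurableSpace X]
    [BorelSpace X] {s : ℝ} (hs : 0 < s) {S : Set X} (hS : μH[s] S = 0) {ε : ℝ≥0∞} (hε : ε ≠ 0) :
    ∃ (t : ℕ → Set X) (ρ : ℕ → ℝ), S ⊆ ⋃ j, t j ∧ (∀ j, 0 < ρ j ∧ ρ j ≤ 1) ∧
      (∀ j, ediam (t j) ≤ ENNReal.ofReal (ρ j)) ∧ ∑' j, ENNReal.ofReal (ρ j ^ s) < ε := by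
  set δ : ℝ≥0∞ := min ε 1 / 2
  have hδ : 0 < δ := by simp [δ, pos_iff_ne_zero, hε]
  obtain ⟨t, hSt, ht⟩ : ∃ t : ℕ → Set X, S ⊆ ⋃ j, t j ∧ ∑' j, ediam (t j) ^ s < δ := by
    rw [Measure.hausdorffMeasure_apply] at hS
    simp only [ENNReal.iSup_eq_zero] at hS
    have hlt := (hS 1 one_pos).trans_lt hδ
    simp only [iInf_lt_iff] at hlt
    obtain ⟨t, hSt, -, ht⟩ := hlt
    refine ⟨t, hSt, lt_of_le_of_lt (ENNReal.tsum_le_tsum fun j => ?_) ht⟩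
    rcases (t j).eq_empty_or_nonempty with hj | hj <;> simp [hj, hs]
  obtain ⟨η, hη, hsum⟩ := ENNReal.exists_pos_sum_of_countable' hδ.ne' ℕ
  have htotal : ∑' j, (ediam (t j) ^ s + η j) < min ε 1 := by
    rw [ENNReal.tsum_add, ← ENNReal.add_halves (min ε 1)]
    exact ENNReal.add_lt_add ht hsum
  set τ : ℕ → ℝ≥0∞ := fun j => (ediam (t j) ^ s + η j) ^ s⁻¹
  have hτ_rpow (j : ℕ) : τ j ^ s = ediam (t j) ^ s + η j := ENNReal.rpow_inv_rpow hs.ne' _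
  have hτ_le (j : ℕ) : τ j ≤ 1 := by
    refine ENNReal.rpow_le_one ?_ (inv_nonneg.mpr hs.le)
    exact (ENNReal.le_tsum j).trans (htotal.le.trans (min_le_right _ _))
  have hτ_top (j : ℕ) : τ j ≠ ⊤ := ne_top_of_le_ne_top ENNReal.one_ne_top (hτ_le j)
  have hτ_pos (j : ℕ) : 0 < (τ j).toReal := by
    refine ENNReal.toReal_pos (fun h => (hη j).ne' ?_) (hτ_top j)
    exact (add_eq_zero.mp ((hτ_rpow j).symm.trans (by rw [h, ENNReal.zero_rpow_of_pos hs]))).2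
  refine ⟨t, fun j => (τ j).toReal, hSt, fun j => ⟨hτ_pos j, ?_⟩, fun j => ?_, ?_⟩
  · exact ENNReal.toReal_le_of_le_ofReal zero_le_one (by simpa using hτ_le j)
  · rw [ENNReal.ofReal_toReal (hτ_top j), ENNReal.le_rpow_inv_iff hs]
    exact le_self_add
  · refine lt_of_eq_of_lt (tsum_congr fun j => ?_) (htotal.trans_le (min_le_left _ _))
    rw [← ENNReal.ofReal_rpow_of_pos (hτ_pos j), ENNReal.ofReal_toReal (hτ_top j), hτ_rpow]

variable {ι : Type*} [Fintype ι]

lemma exists_finset_dyadicBox_meeting {e : ι → ℕ} {U : Set (ι → ℝ)} {ρ : ℝ}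
    (hρ : ∀ r, 1 ≤ ρ * 2 ^ e r) (hρ₀ : 0 ≤ ρ) (hU : ediam U ≤ ENNReal.ofReal ρ) :
    ∃ H : Finset (ι → ℤ), (∀ v, (U ∩ dyadicBox e v).Nonempty → v ∈ H) ∧
      (#H : ℝ) ≤ (4 * ρ) ^ Fintype.card ι * 2 ^ ∑ r, e r := by
  rcases U.eq_empty_or_nonempty with rfl | ⟨y, hy⟩
  · exact ⟨∅, by simp, by rw [Finset.card_empty, Nat.cast_zero]; positivity⟩
  classical
  refine ⟨Fintype.piFinset fun r =>
    Finset.Icc ⌈(y r - ρ) * 2 ^ e r - 1⌉ ⌊(y r + ρ) * 2 ^ e r⌋, ?_, ?_⟩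
  · rintro v ⟨x, hx, hxv⟩
    refine Fintype.mem_piFinset.mpr fun r => ?_
    have hdist : dist (x r) (y r) ≤ ρ := by
      refine (dist_le_pi_dist x y r).trans ((ENNReal.ofReal_le_ofReal_iff hρ₀).mp ?_)
      rw [← edist_dist]
      exact (edist_le_ediam_of_mem hx hy).trans hU
    rw [Real.dist_eq, abs_le] at hdist
    obtain ⟨hlow, hhigh⟩ := mem_dyadicBox.mp hxv r
    have h₁ : (y r - ρ) * 2 ^ e r ≤ x r * 2 ^ e r := by gcongr; linarith
    have h₂ : x r * 2 ^ e r ≤ (y r + ρ) * 2 ^ e r := by gcongr; linarith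
    rw [Finset.mem_Icc, Int.ceil_le, Int.le_floor]
    constructor <;> linarith
  · rw [Fintype.card_piFinset, Nat.cast_prod]
    calc ∏ r, (#(Finset.Icc ⌈(y r - ρ) * 2 ^ e r - 1⌉ ⌊(y r + ρ) * 2 ^ e r⌋) : ℝ)
        ≤ ∏ r, 4 * ρ * 2 ^ e r := by
          refine Finset.prod_le_prod (fun _ _ => by positivity) fun r _ => ?_
          refine (card_Icc_ceil_floor_le ?_).trans ?_ <;> linarith [hρ r]
      _ = (4 * ρ) ^ Fintype.card ι * 2 ^ ∑ r, e r := by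
          rw [Finset.prod_mul_distrib, Finset.prod_const, Finset.card_univ,
            Finset.prod_pow_eq_pow_sum]

/-- The mass given to each box of level `k` when bounding from below the cost of a cover of a
`branchSet`: its volume, corrected by a factor `2` for each level, since up to half of the children
may have been discarded. -/
noncomputable def boxMass (e : ℕ → ι → ℕ) (k : ℕ) : ℝ := 2 ^ k / 2 ^ ∑ r, e k r

variable {e : ℕ → ι → ℕ}

lemma boxMass_pos (k : ℕ) : 0 < boxMass e k := by
  unfold boxMass
  positivity

lemma inv_two_pow_pow_mul_two_le {m N : ℕ} {s : ℝ} (hms : 1 ≤ m * (N - s)) :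
    ((2 : ℝ) ^ m)⁻¹ ^ N * 2 ≤ ((2 : ℝ) ^ m)⁻¹ ^ s := by
  have hrpow : ((2 : ℝ) ^ m)⁻¹ = 2 ^ (-m : ℝ) := by
    rw [Real.rpow_neg zero_le_two, Real.rpow_natCast]
  rw [← Real.rpow_natCast _ N, hrpow, ← Real.rpow_mul zero_le_two, ← Real.rpow_mul zero_le_two,
    ← Real.rpow_add_one two_ne_zero]
  exact Real.rpow_le_rpow_of_exponent_le one_le_two (by linarith)

lemma exists_finset_dyadicBox_meeting_boxMass_le {m : ℕ} (hm : ∀ k r, m * k ≤ e k r) {s : ℝ}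
    (hs : 0 ≤ s) (hms : 1 ≤ m * (Fintype.card ι - s)) {U : Set (ι → ℝ)} {ρ : ℝ} (hρ₀ : 0 < ρ)
    (hρ₁ : ρ ≤ 1) (hU : ediam U ≤ ENNReal.ofReal ρ) :
    ∃ (k : ℕ) (H : Finset (ι → ℤ)), (∀ v, (U ∩ dyadicBox (e k) v).Nonempty → v ∈ H) ∧
      #H * boxMass e k ≤ 4 ^ Fintype.card ι * (2 ^ m) ^ s * ρ ^ s := by
  have hm₀ : m ≠ 0 := by
    rintro rfl
    simp at hms
    linarith
  set N := Fintype.card ι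
  set y : ℝ := (2 ^ m)⁻¹
  have hy₀ : 0 < y := by positivity
  obtain ⟨k, hk, hk'⟩ := exists_nat_pow_near_of_lt_one hρ₀ hρ₁ hy₀
    (inv_lt_one_of_one_lt₀ (one_lt_pow₀ one_lt_two hm₀))
  have hyk (r : ι) : 1 ≤ y ^ k * 2 ^ e k r := by
    rw [inv_pow, ← pow_mul, inv_mul_eq_div, one_le_div (by positivity)]
    exact pow_le_pow_right₀ one_le_two (hm k r)
  have hyρ : y ^ k ≤ 2 ^ m * ρ := by
    rw [← inv_mul_le_iff₀ (by positivity), ← pow_succ']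
    exact hk.le
  obtain ⟨H, hH, hcard⟩ := exists_finset_dyadicBox_meeting hyk (by positivity)
    (hU.trans (ENNReal.ofReal_le_ofReal hk'))
  refine ⟨k, H, hH, ?_⟩
  calc #H * boxMass e k
      ≤ (4 * y ^ k) ^ N * 2 ^ (∑ r, e k r) * boxMass e k := by
        gcongr
        exact (boxMass_pos k).le
    _ = 4 ^ N * (y ^ N * 2) ^ k := by
        rw [boxMass]
        field_simp
        ring
    _ ≤ 4 ^ N * (y ^ s) ^ k := by gcongr; exact inv_two_pow_pow_mul_two_le hms
    _ = 4 ^ N * (y ^ k) ^ s := by rw [Real.rpow_pow_comm hy₀.le]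
    _ ≤ 4 ^ N * (2 ^ m * ρ) ^ s := by gcongr
    _ = 4 ^ N * (2 ^ m) ^ s * ρ ^ s := by
        rw [Real.mul_rpow (by positivity) hρ₀.le, mul_assoc]

variable [DecidableEq ι]

lemma boxMass_le_card_mul (he : Monotone e) {n : ℕ} {u : ι → ℤ} {H : Finset (ι → ℤ)}
    (hH : #(dyadicChildren (e (n + 1) - e n) u) ≤ 2 * #H) :
    boxMass e n ≤ #H * boxMass e (n + 1) := by
  have hsum : ∑ r, e (n + 1) r = ∑ r, e n r + ∑ r, (e (n + 1) - e n) r := by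
    rw [← Finset.sum_add_distrib]
    exact Finset.sum_congr rfl fun r _ => (Nat.add_sub_of_le (he n.le_succ r)).symm
  rw [card_dyadicChildren] at hH
  have hH : (2 : ℝ) ^ ∑ r, (e (n + 1) - e n) r ≤ 2 * #H := by exact_mod_cast hH
  calc boxMass e n
      = 2 ^ n * 2 ^ (∑ r, (e (n + 1) - e n) r) / 2 ^ ∑ r, e (n + 1) r := by
        rw [boxMass, hsum, pow_add]
        field_simp
    _ ≤ 2 ^ n * (2 * #H) / 2 ^ ∑ r, e (n + 1) r := by gcongr
    _ = #H * boxMass e (n + 1) := by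
        rw [boxMass, pow_succ]
        ring

variable {G : ℕ → (ι → ℤ) → Finset (ι → ℤ)}

lemma boxMass_zero_le_tsum_of_branchSet_subset (he : Monotone e)
    (hG : ∀ n u, G n u ⊆ dyadicChildren (e (n + 1) - e n) u)
    (hcard : ∀ n u, #(dyadicChildren (e (n + 1) - e n) u) ≤ 2 * #(G n u)) {J : Type*}
    {t : J → Set (ι → ℝ)} (ht : branchSet e G ⊆ ⋃ j, t j) (κ : J → ℕ) (H : J → Finset (ι → ℤ))
    (hH : ∀ j v, (t j ∩ dyadicBox (e (κ j)) v).Nonempty → v ∈ H j) :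
    ENNReal.ofReal (boxMass e 0) ≤ ∑' j, ENNReal.ofReal (#(H j) * boxMass e (κ j)) := by
  by_contra! hlt
  set g : ℕ → ℝ≥0∞ := fun k => ENNReal.ofReal (boxMass e k)
  have hg (n : ℕ) (u : ι → ℤ) : g n ≤ #(G n u) • g (n + 1) := by
    rw [← ENNReal.ofReal_nsmul, nsmul_eq_mul]
    exact ENNReal.ofReal_le_ofReal (boxMass_le_card_mul he (hcard n u))
  have htotal : ∑' p : Σ j, H j, g (κ p.1) < g 0 := by
    refine lt_of_eq_of_lt ?_ hlt
    rw [ENNReal.tsum_sigma fun j (_ : H j) => g (κ j)]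
    refine tsum_congr fun j => ?_
    rw [ENNReal.ofReal_mul (Nat.cast_nonneg _)]
    simp [g]
  obtain ⟨u, hu, hu'⟩ := exists_branch_avoiding he hG hg (fun p : Σ j, H j => κ p.1)
    (fun p => p.2) htotal
  obtain ⟨x, hx⟩ := exists_mem_branch_boxes he hG hu
  obtain ⟨j, hj⟩ := Set.mem_iUnion.mp (ht ⟨u, hu, hx⟩)
  exact hu' ⟨j, u (κ j), hH j _ ⟨x, hj, hx (κ j)⟩⟩ rfl

lemma hausdorffMeasure_branchSet_ne_zero (he : Monotone e) {m : ℕ} (hm : ∀ k r, m * k ≤ e k r)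
    (hG : ∀ n u, G n u ⊆ dyadicChildren (e (n + 1) - e n) u)
    (hcard : ∀ n u, #(dyadicChildren (e (n + 1) - e n) u) ≤ 2 * #(G n u)) {s : ℝ} (hs : 0 < s)
    (hms : 1 ≤ m * (Fintype.card ι - s)) : μH[s] (branchSet e G) ≠ 0 := by
  intro hzero
  set C : ℝ := 4 ^ Fintype.card ι * (2 ^ m) ^ s
  have hC : 0 < C := by positivity
  obtain ⟨t, ρ, ht, hρ, htρ, hsum⟩ := exists_cover_of_hausdorffMeasure_eq_zero hs hzero
    (ε := ENNReal.ofReal (boxMass e 0) / ENNReal.ofReal C)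
    (ENNReal.div_pos (ENNReal.ofReal_pos.mpr (boxMass_pos 0)).ne' ENNReal.ofReal_ne_top).ne'
  choose κ H hH hcost using fun j =>
    exists_finset_dyadicBox_meeting_boxMass_le hm hs.le hms (hρ j).1 (hρ j).2 (htρ j)
  refine (boxMass_zero_le_tsum_of_branchSet_subset he hG hcard ht κ H hH).not_gt ?_
  calc ∑' j, ENNReal.ofReal (#(H j) * boxMass e (κ j))
      ≤ ∑' j, ENNReal.ofReal C * ENNReal.ofReal (ρ j ^ s) := by
        refine ENNReal.tsum_le_tsum fun j => ?_
        rw [← ENNReal.ofReal_mul hC.le]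
        exact ENNReal.ofReal_le_ofReal (hcost j)
    _ < ENNReal.ofReal (boxMass e 0) := by
        rw [ENNReal.tsum_mul_left, mul_comm]
        exact ENNReal.mul_lt_of_lt_div hsum

end HausdorffMeasure

section WeightedBoxes

open scoped Nat Finset

variable {ι : Type*} (m : ℕ) (i : ι → ℝ)

/-- The exponents of the boxes of level `k` in the construction for the weights `i`: their side
length in direction `r` is `R ^ (-k * (1 + i r))`, where `R = 2 ^ m`, up to a factor `2` caused by
rounding the exponent to an integer. -/
noncomputable def weightedExponent (k : ℕ) (r : ι) : ℕ := ⌊(k : ℝ) * m * (1 + i r)⌋₊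

lemma two_pow_mul_eq_rpow (k : ℕ) (t : ℝ) :
    (2 : ℝ) ^ ((k : ℝ) * m * t) = ((2 ^ m) ^ k) ^ t := by
  rw [← pow_mul, Real.rpow_mul zero_le_two, mul_comm m, ← Nat.cast_mul, Real.rpow_natCast]

lemma rpow_le_two_mul_two_pow_weightedExponent (k : ℕ) (r : ι) :
    (((2 : ℝ) ^ m) ^ k) ^ (1 + i r) ≤ 2 * 2 ^ weightedExponent m i k r := by
  rw [← two_pow_mul_eq_rpow, ← pow_succ', ← Real.rpow_natCast, Nat.cast_succ]
  exact Real.rpow_le_rpow_of_exponent_le one_le_two (Nat.lt_floor_add_one _).le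

variable {i}

lemma two_pow_weightedExponent_le {r : ι} (hi : 0 ≤ i r) (k : ℕ) :
    (2 : ℝ) ^ weightedExponent m i k r ≤ ((2 ^ m) ^ k) ^ (1 + i r) := by
  rw [← two_pow_mul_eq_rpow, ← Real.rpow_natCast]
  exact Real.rpow_le_rpow_of_exponent_le one_le_two (Nat.floor_le (by positivity))

lemma weightedExponent_add_le {r : ι} (hi : 0 ≤ i r) (k : ℕ) :
    weightedExponent m i k r + m ≤ weightedExponent m i (k + 1) r := by
  rw [weightedExponent, ← Nat.floor_add_natCast (by positivity)]
  refine Nat.floor_le_floor ?_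
  push_cast
  linarith [show 0 ≤ m * i r by positivity]

variable (hi : ∀ r, 0 ≤ i r)
include hi

lemma weightedExponent_monotone : Monotone (weightedExponent m i) :=
  monotone_nat_of_le_succ fun k r => le_of_add_le_left (weightedExponent_add_le m (hi r) k)

lemma mul_le_weightedExponent (k : ℕ) (r : ι) : m * k ≤ weightedExponent m i k r := by
  refine Nat.le_floor ?_
  push_cast
  nlinarith [show 0 ≤ k * m * i r by have := hi r; positivity]

end WeightedBoxes

section WeightedApproximation

open MeasureTheory
open scoped Nat Finset

lemma weighted_volume_lt_one {ι : Type*} (m n : ℕ) {i : ι → ℝ} {s : Finset ι}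
    (hs : 1 ≤ ∑ r ∈ s, i r) {K : ℝ} (hK₀ : 0 < K) (hK : (#s + 1)! * 4 ^ #s < K ^ (#s + 1)) :
    (#s + 1)! * ((2 ^ m) ^ n / K *
      ∏ r ∈ s, 2 * ((2 ^ m) ^ n / K) / 2 ^ weightedExponent m i n r) < 1 := by
  set X : ℝ := (2 ^ m) ^ n
  have hX : 1 ≤ X := one_le_pow₀ (one_le_pow₀ one_le_two)
  have hX₀ : 0 < X := by positivity
  have hside (r : ι) : 2 * (X / K) / 2 ^ weightedExponent m i n r ≤ 4 / K * (X ^ i r)⁻¹ := by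
    have hexp := rpow_le_two_mul_two_pow_weightedExponent m i n r
    rw [Real.rpow_add hX₀, Real.rpow_one] at hexp
    rw [div_le_iff₀ (by positivity)]
    calc 2 * (X / K) = 2 / K * (X ^ i r)⁻¹ * (X * X ^ i r) := by field_simp
      _ ≤ 2 / K * (X ^ i r)⁻¹ * (2 * 2 ^ weightedExponent m i n r) := by gcongr
      _ = 4 / K * (X ^ i r)⁻¹ * 2 ^ weightedExponent m i n r := by ring
  have hprod : ∏ r ∈ s, 2 * (X / K) / 2 ^ weightedExponent m i n r ≤ (4 / K) ^ #s * X⁻¹ := by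
    refine (Finset.prod_le_prod (fun _ _ => by positivity) fun r _ => hside r).trans ?_
    rw [Finset.prod_mul_distrib, Finset.prod_const, Finset.prod_inv_distrib,
      ← Real.rpow_sum_of_pos hX₀]
    gcongr
    exact Real.self_le_rpow_of_one_le hX hs
  calc (#s + 1)! * (X / K * ∏ r ∈ s, 2 * (X / K) / 2 ^ weightedExponent m i n r)
      ≤ (#s + 1)! * (X / K * ((4 / K) ^ #s * X⁻¹)) := by gcongr
    _ = (#s + 1)! * 4 ^ #s / K ^ (#s + 1) := by rw [div_pow, pow_succ' K]; field_simp
    _ < 1 := (div_lt_one (by positivity)).mpr hK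

lemma div_rpow_le_div {t c B q E : ℝ} (hc : 0 ≤ c) (hB : 0 ≤ B) (hq : 0 < q) (hE : 0 < E)
    (hcB : c ^ t * B ^ (1 + t) ≤ 1) (hEq : E ≤ (B * q) ^ (1 + t)) : (c / q) ^ t ≤ q / E := by
  rw [Real.div_rpow hc hq.le, div_le_div_iff₀ (by positivity) hE]
  calc c ^ t * E ≤ c ^ t * (B * q) ^ (1 + t) := by gcongr
    _ = c ^ t * B ^ (1 + t) * q ^ (1 + t) := by rw [Real.mul_rpow hB hq.le, mul_assoc]
    _ ≤ 1 * q ^ (1 + t) := by gcongr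
    _ = q * q ^ t := by rw [one_mul, Real.rpow_add hq, Real.rpow_one]

lemma exists_pos_rpow_mul_le_one {ι : Type*} [Finite ι] (i T : ι → ℝ) :
    ∃ c : ℝ, 0 < c ∧ ∀ r, 0 < i r → c ^ i r * T r ≤ 1 := by
  have hsmall : ∀ᶠ c : ℝ in nhdsWithin 0 (Set.Ioi 0), ∀ r, 0 < i r → c ^ i r * T r ≤ 1 := by
    refine Filter.eventually_all.mpr fun r => Filter.eventually_imp_distrib_left.mpr fun hr => ?_
    have hlim : Filter.Tendsto (fun c : ℝ => c ^ i r * T r) (nhds 0) (nhds (0 ^ i r * T r)) :=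
      (Real.continuousAt_rpow_const 0 (i r) (.inr hr.le)).mul continuousAt_const
    rw [Real.zero_rpow hr.ne', zero_mul] at hlim
    exact (hlim.mono_left nhdsWithin_le_nhds).eventually (ge_mem_nhds one_pos)
  obtain ⟨c, hc, hc₀⟩ := (hsmall.and self_mem_nhdsWithin).exists
  exact ⟨c, hc₀, hc⟩

lemma exists_weighted_children_avoiding {ι : Type*} [Fintype ι] [DecidableEq ι] {m : ℕ}
    (hm : 2 * (2 * (2 * Fintype.card ι) + 1) ≤ 2 ^ m) {i : ι → ℝ} (hi : ∀ r, 0 ≤ i r)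
    (hsum : 1 ≤ ∑ r, i r) :
    ∃ K : ℝ, 1 ≤ K ∧ ∃ G : ℕ → (ι → ℤ) → Finset (ι → ℤ),
      (∀ n u, G n u ⊆
        dyadicChildren (weightedExponent m i (n + 1) - weightedExponent m i n) u) ∧
      (∀ n u, #(dyadicChildren (weightedExponent m i (n + 1) - weightedExponent m i n) u) ≤
        2 * #(G n u)) ∧
      ∀ n u, ∀ v ∈ G n u, ∀ x ∈ dyadicBox (weightedExponent m i (n + 1)) v, ∀ q : ℕ, 0 < q →
        q ≤ (2 ^ m) ^ n / K →
          ∃ r, 0 < i r ∧ q / 2 ^ weightedExponent m i (n + 1) r < distToNearestInt (q * x r) := by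
  set e := weightedExponent m i
  set s : Finset ι := {r | 0 < i r}
  have hs : 1 ≤ ∑ r ∈ s, i r := by
    rwa [Finset.sum_filter_of_ne fun r _ hr => (hi r).lt_of_ne' hr]
  obtain ⟨K, hK₁, hK⟩ : ∃ K : ℝ, 1 ≤ K ∧ (#s + 1)! * 4 ^ #s < K ^ (#s + 1) := by
    have hpos : (0 : ℝ) ≤ (#s + 1)! * 4 ^ #s := by positivity
    exact ⟨(#s + 1)! * 4 ^ #s + 1, by linarith,
      (lt_add_one _).trans_le (le_self_pow₀ (by linarith) (Nat.succ_ne_zero _))⟩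
  have hstep (n : ℕ) (r : ι) :
      2 * (2 * (2 * Fintype.card ι) + 1) ≤ 2 ^ (e (n + 1) - e n) r :=
    hm.trans (Nat.pow_le_pow_right two_pos
      (Nat.le_sub_of_add_le' (weightedExponent_add_le m (hi r) n)))
  choose G hGsub hGcard hG using fun n u =>
    exists_dyadicChildren_avoiding_approximations s (e n) (e (n + 1) - e n) u ((2 ^ m) ^ n / K)
      (hstep n) (weighted_volume_lt_one m n hs (by positivity) hK)
  simp only [add_tsub_cancel_of_le (weightedExponent_monotone m hi (Nat.le_succ _)), e, s,
    Finset.mem_filter_univ] at hG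
  exact ⟨K, hK₁, G, hGsub, hGcard, hG⟩

variable {N : ℕ} {i : Fin N → ℝ}

lemma branchSet_subset_badWeighted {m : ℕ} (hm : m ≠ 0) {K : ℝ} (hK : 1 ≤ K)
    {G : ℕ → (Fin N → ℤ) → Finset (Fin N → ℤ)}
    (hG : ∀ n u, ∀ v ∈ G n u, ∀ x ∈ dyadicBox (weightedExponent m i (n + 1)) v, ∀ q : ℕ, 0 < q →
      q ≤ (2 ^ m) ^ n / K →
        ∃ r, 0 < i r ∧ q / 2 ^ weightedExponent m i (n + 1) r < distToNearestInt (q * x r)) :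
    branchSet (weightedExponent m i) G ⊆ badWeighted i := by
  rintro x ⟨u, hu, hx⟩
  set R : ℝ := 2 ^ m
  obtain ⟨c, hc₀, hc⟩ := exists_pos_rpow_mul_le_one i fun r => (R ^ 2 * K) ^ (1 + i r)
  refine ⟨c, hc₀, fun q hq => ?_⟩
  obtain ⟨n, hn, hn'⟩ := exists_nat_pow_near (x := K * q) (y := R)
    (one_le_mul_of_one_le_of_one_le hK (Nat.one_le_cast.mpr hq)) (one_lt_pow₀ one_lt_two hm)
  have hqQ : q ≤ R ^ (n + 1) / K := by
    rw [le_div_iff₀ (by positivity), mul_comm]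
    exact hn'.le
  obtain ⟨r, hr, hfar⟩ := hG (n + 1) _ _ (hu (n + 1)) x (hx (n + 2)) q hq hqQ
  refine ⟨r, hr, ?_⟩
  have hq₀ : (0 : ℝ) < q := Nat.cast_pos.mpr hq
  have hEq : (2 : ℝ) ^ weightedExponent m i (n + 2) r ≤ (R ^ 2 * K * q) ^ (1 + i r) := by
    refine (two_pow_weightedExponent_le m hr.le (n + 2)).trans ?_
    rw [pow_add, mul_comm, mul_assoc]
    gcongr
  rw [one_div, distToNearestInt, Real.lt_rpow_inv_iff_of_pos (by positivity) (abs_nonneg _) hr]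
  exact (div_rpow_le_div hc₀.le (by positivity) hq₀ (by positivity) (hc r hr) hEq).trans_lt hfar

lemma hausdorffMeasure_badWeighted_ne_zero (hi : ∀ r, 0 ≤ i r) (hsum : 1 ≤ ∑ r, i r) {d : ℝ}
    (hd : 0 < d) (hdN : d < N) : μH[d] (badWeighted i) ≠ 0 := by
  obtain ⟨k, hk⟩ := exists_nat_ge (1 / ((N : ℝ) - d))
  set m : ℕ := k + 2 * (2 * (2 * N) + 1)
  have hm : 2 * (2 * (2 * Fintype.card (Fin N)) + 1) ≤ 2 ^ m := by
    rw [Fintype.card_fin]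
    exact (Nat.le_add_left _ _).trans Nat.lt_two_pow_self.le
  have hmd : 1 ≤ m * (Fintype.card (Fin N) - d) := by
    rw [Fintype.card_fin, ← div_le_iff₀ (sub_pos.mpr hdN)]
    exact hk.trans (Nat.cast_le.mpr (Nat.le_add_right _ _))
  obtain ⟨K, hK, G, hGsub, hGcard, hG⟩ := exists_weighted_children_avoiding hm hi hsum
  have hbad := branchSet_subset_badWeighted (by lia) hK hG
  refine fun hzero => ?_
  exact hausdorffMeasure_branchSet_ne_zero (weightedExponent_monotone m hi)
    (mul_le_weightedExponent m hi) hGsub hGcard hd hmd (measure_mono_null hbad hzero)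

theorem dimH_badWeighted_eq_general (N : ℕ) (i : Fin N → ℝ) (hi : ∀ r, 0 ≤ i r)
    (hsum : 1 ≤ ∑ r, i r) : dimH (badWeighted i) = (N : ℝ≥0∞) := by
  apply le_antisymm
  · rw [← Real.dimH_univ_pi_fin N]
    exact dimH_mono (Set.subset_univ _)
  · refine le_of_forall_lt_imp_le_of_dense fun d hd => ?_
    lift d to NNReal using hd.ne_top
    rcases eq_or_ne d 0 with rfl | hd₀
    · exact zero_le
    · exact le_dimH_of_hausdorffMeasure_ne_zero
        (hausdorffMeasure_badWeighted_ne_zero hi hsum (NNReal.coe_pos.mpr hd₀.pos)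
          (by exact_mod_cast hd))

end WeightedApproximation

/-- For any `N`-tuple of real numbers `i₁, …, i_N ≥ 0` with `i₁ + ⋯ + i_N = 1`, the set
`Bad(i₁, …, i_N) ⊆ ℝ^N` has Hausdorff dimension `N`. -/
theorem dimH_badWeighted_eq (N : ℕ) (i : Fin N → ℝ) (hi : ∀ r, 0 ≤ i r)
    (hsum : ∑ r, i r = 1) :
    dimH (badWeighted i) = (N : ℝ≥0∞) :=
  dimH_badWeighted_eq_general N i hi hsum.ge
end

section
/- Let p be a prime. For any N-tuple (i₁,…,i_N) with i_s ≥ 0 and i₁+⋯+i_N = 1, the set Bad_{ℤ_p}(i₁,…,i_N) ⊆ ℤ_p^N has Hausdorff dimension N. -/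
open scoped ENNReal

/-!
Give generation `k` the polyradius `(R ^ (-(1 + i s) * k))ₛ` and call a rational point dangerous for
generation `k` if its height is at most `h * R ^ k`. By a determinant argument (a `p`-adic simplex
lemma) the dangerous points lying in one polydisc of generation `k` all lie on one affine
hyperplane, as `∏ s, R ^ (-(1 + i s) * k) ≤ (R ^ k) ^ (-(N + 1))`. A translation in a
single coordinate moves the neighbourhood of this hyperplane off itself within the polydisc, so the
neighbourhood takes up at most half of the polydisc. A point that avoids the dangerous
neighbourhoods of all generations is badly approximable.

If the bad set had measure zero for the Hausdorff measure of some dimension `d < N`, it could be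
covered by balls of radii `δ j` with `∑ δ j ^ d` small. Weighting Haar measure `μ` on the `j`-th
ball by `2 * δ j ^ (d - N)` gives a measure `ν` of total mass less than `1`. Since at most half of
the measure is lost in each generation, one can choose nested polydiscs that avoid the dangerous
neighbourhoods and satisfy `ν < 2 ^ k * μ`. For `R` large in terms of `N - d`, the bad point in
their intersection lies in none of the balls: a polydisc of generation `k` inside the `j`-th ball
with `k` minimal would have `ν ≥ 2 ^ k * μ`.
-/

namespace BadPadic

open MeasureTheory Metric Set
open scoped Nat NNReal

section Measure

variable {β : Type*} [MeasurableSpace β] {μ : Measure β} {D : Set β}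

theorem measure_le_two_mul_measure_diff [IsFiniteMeasure μ] {B : Set β} (hD : MeasurableSet D)
    (h : 2 * μ (D ∩ B) ≤ μ B) : μ B ≤ 2 * μ (B \ D) := by
  rw [inter_comm, ← measure_inter_add_sdiff B hD, two_mul] at h
  rw [← measure_inter_add_sdiff B hD, two_mul]
  exact add_le_add_left ((ENNReal.add_le_add_iff_left (measure_ne_top μ _)).1 h) _

theorem mul_measure_le_sum_smul_restrict {J : Type*} {w : J → ℝ≥0∞} {B : J → Set β}
    (hD : MeasurableSet D) {j : J} (hDB : D ⊆ B j) :
    w j * μ D ≤ Measure.sum (fun j => w j • μ.restrict (B j)) D := by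
  calc w j * μ D = (w j • μ.restrict (B j)) D := by
        simp [Measure.restrict_apply hD, inter_eq_left.2 hDB]
    _ ≤ Measure.sum (fun j => w j • μ.restrict (B j)) D := Measure.le_sum _ j D

theorem exists_iUnion_closedBall_of_hausdorffMeasure_eq_zero {X : Type*} [MetricSpace X]
    [Nonempty X] [MeasurableSpace X] [BorelSpace X] {d : ℝ} (hd : 0 < d) {S : Set X}
    (hS : μH[d] S = 0) {η : ℝ≥0∞} (hη : 0 < η) :
    ∃ (u : ℕ → X) (δ : ℕ → ℝ), (∀ j, 0 < δ j) ∧ S ⊆ ⋃ j, closedBall (u j) (δ j) ∧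
      ∑' j, ENNReal.ofReal (δ j ^ d) < η := by
  have hη₂ : 0 < η / 2 := ENNReal.half_pos hη.ne'
  obtain ⟨t, hSt, ht⟩ : ∃ t : ℕ → Set X, S ⊆ ⋃ j, t j ∧
      ∑' j, ⨆ _ : (t j).Nonempty, ediam (t j) ^ d < η / 2 := by
    rw [Measure.hausdorffMeasure_apply] at hS
    have hlt := (le_iSup₂_of_le 1 one_pos le_rfl).trans_lt (hS.trans_lt hη₂)
    simp only [iInf_lt_iff] at hlt
    obtain ⟨t, hSt, -, ht⟩ := hlt
    exact ⟨t, hSt, ht⟩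
  obtain ⟨ε, hε, hεsum⟩ := ENNReal.exists_pos_sum_of_countable hη₂.ne' ℕ
  let σ (j : ℕ) : ℝ≥0∞ := (⨆ _ : (t j).Nonempty, ediam (t j) ^ d) + ε j
  have hσsum : ∑' j, σ j < η := by
    rw [ENNReal.tsum_add, ← ENNReal.add_halves η]
    exact ENNReal.add_lt_add ht hεsum
  have hσtop (j : ℕ) : σ j ≠ ∞ := ((ENNReal.le_tsum j).trans_lt (hσsum.trans_le le_top)).ne
  have hσpos (j : ℕ) : 0 < (σ j).toReal :=
    ENNReal.toReal_pos ((ENNReal.coe_pos.2 (hε j)).trans_le le_add_self).ne' (hσtop j)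
  choose! u hu using show ∀ j, (t j).Nonempty → ∃ y, y ∈ t j from fun _ => id
  refine ⟨u, fun j => (σ j).toReal ^ d⁻¹, fun j => Real.rpow_pos_of_pos (hσpos j) _,
    fun x hx => ?_, ?_⟩
  · obtain ⟨j, hxj⟩ := mem_iUnion.1 (hSt hx)
    refine mem_iUnion.2 ⟨j, ?_⟩
    have hdiam : edist x (u j) ^ d ≤ σ j :=
      calc edist x (u j) ^ d ≤ ediam (t j) ^ d := by
            gcongr; exact edist_le_ediam_of_mem hxj (hu j ⟨x, hxj⟩)
        _ ≤ ⨆ _ : (t j).Nonempty, ediam (t j) ^ d :=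
            le_iSup_of_le (ι := (t j).Nonempty) ⟨x, hxj⟩ le_rfl
        _ ≤ σ j := le_self_add
    rw [mem_closedBall, Real.le_rpow_inv_iff_of_pos dist_nonneg ENNReal.toReal_nonneg hd,
      dist_edist, ENNReal.toReal_rpow]
    exact ENNReal.toReal_mono (hσtop j) hdiam
  · simpa [Real.rpow_inv_rpow ENNReal.toReal_nonneg hd.ne', ENNReal.ofReal_toReal (hσtop _)]
      using hσsum

end Measure

section Real

theorem exists_inv_pow_le_and_two_pow_le {R ε δ : ℝ} (hR : 1 < R) (hε : 0 ≤ ε)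
    (hRε : 2 ≤ R ^ ε) (hδ : 0 < δ) (hδ₁ : δ ≤ 1) :
    ∃ k : ℕ, R⁻¹ ^ k ≤ δ ∧ 2 ^ k ≤ 2 * δ ^ (-ε) := by
  have hR₀ : 0 < R := one_pos.trans hR
  obtain ⟨n, hn, hn'⟩ := exists_nat_pow_near_of_lt_one hδ hδ₁ (inv_pos.2 hR₀)
    (inv_lt_one_of_one_lt₀ hR)
  refine ⟨n + 1, hn.le, ?_⟩
  calc (2 : ℝ) ^ (n + 1) ≤ 2 * (R ^ ε) ^ n := by rw [pow_succ']; gcongr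
    _ = 2 * (R⁻¹ ^ n) ^ (-ε) := by
        rw [Real.rpow_neg (by positivity), inv_pow, Real.inv_rpow (by positivity), inv_inv,
          Real.rpow_pow_comm hR₀.le]
    _ ≤ 2 * δ ^ (-ε) := by
        gcongr 2 * ?_
        exact Real.rpow_le_rpow_of_nonpos hδ hn' (neg_nonpos.2 hε)

theorem exists_pos_le_one_mul_pow_lt_one (C : ℝ) {n : ℕ} (hn : n ≠ 0) :
    ∃ h : ℝ, 0 < h ∧ h ≤ 1 ∧ C * h ^ n < 1 := by
  have hlim : Filter.Tendsto (fun h : ℝ => C * h ^ n) (nhdsWithin 0 (Ioi 0)) (nhds 0) :=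
    tendsto_nhdsWithin_of_tendsto_nhds (Continuous.tendsto' (by fun_prop) _ _ (by simp [hn]))
  obtain ⟨h, hlt, hh, hh₁⟩ :=
    ((hlim.eventually_lt_const one_pos).and (Ioc_mem_nhdsGT one_pos)).exists
  exact ⟨h, hh, hh₁, hlt⟩

end Real

section Polydisc

variable {ι α : Type*} [PseudoMetricSpace α]

/-- The closed polydisc with centre `x` and polyradius `ρ`. -/
def polydisc (ρ : ι → ℝ) (x : ι → α) : Set (ι → α) :=
  univ.pi fun s => closedBall (x s) (ρ s)

variable {ρ ρ' : ι → ℝ} {x y : ι → α} {U : Set (ι → α)}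

theorem mem_polydisc : y ∈ polydisc ρ x ↔ ∀ s, dist (y s) (x s) ≤ ρ s := by
  simp [polydisc]

theorem mem_polydisc_iff_norm_sub_le {A : Type*} [SeminormedAddCommGroup A] {x y : ι → A} :
    y ∈ polydisc ρ x ↔ ∀ s, ‖y s - x s‖ ≤ ρ s := by
  simp only [mem_polydisc, dist_eq_norm]

theorem mem_polydisc_comm : y ∈ polydisc ρ x ↔ x ∈ polydisc ρ y := by
  simp only [mem_polydisc, dist_comm]

theorem mem_polydisc_self (hρ : ∀ s, 0 ≤ ρ s) (x : ι → α) : x ∈ polydisc ρ x :=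
  mem_polydisc.2 fun s => (dist_self (x s)).trans_le (hρ s)

theorem polydisc_mono (h : ∀ s, ρ' s ≤ ρ s) (x : ι → α) : polydisc ρ' x ⊆ polydisc ρ x :=
  pi_mono fun s _ => closedBall_subset_closedBall (h s)

theorem polydisc_subset_closedBall [Fintype ι] {δ : ℝ} (hδ : 0 ≤ δ) (h : ∀ s, ρ s ≤ δ)
    (x : ι → α) : polydisc ρ x ⊆ closedBall x δ :=
  closedBall_pi x hδ ▸ polydisc_mono h x

theorem isClosed_polydisc (ρ : ι → ℝ) (x : ι → α) : IsClosed (polydisc ρ x) :=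
  isClosed_set_pi fun _ _ => isClosed_closedBall

theorem polydisc_mem_nhds [Finite ι] (hρ : ∀ s, 0 < ρ s) (x : ι → α) :
    polydisc ρ x ∈ nhds x :=
  set_pi_mem_nhds finite_univ fun s _ => closedBall_mem_nhds (x s) (hρ s)

theorem isOpen_of_forall_polydisc_subset [Finite ι] (hρ : ∀ s, 0 < ρ s)
    (hU : ∀ y ∈ U, polydisc ρ y ⊆ U) : IsOpen U :=
  isOpen_iff_mem_nhds.2 fun y hy => Filter.mem_of_superset (polydisc_mem_nhds hρ y) (hU y hy)

variable [IsUltrametricDist α]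

theorem polydisc_eq_of_mem (h : y ∈ polydisc ρ x) : polydisc ρ y = polydisc ρ x :=
  pi_congr rfl fun s hs => (IsUltrametricDist.closedBall_eq_of_mem (h s hs)).symm

theorem polydisc_subset_polydisc_of_mem (hρ : ∀ s, ρ' s ≤ ρ s) (h : y ∈ polydisc ρ x) :
    polydisc ρ' y ⊆ polydisc ρ x :=
  (polydisc_mono hρ y).trans (polydisc_eq_of_mem h).subset

theorem isOpen_polydisc [Finite ι] (hρ : ∀ s, 0 < ρ s) (x : ι → α) : IsOpen (polydisc ρ x) :=
  isOpen_of_forall_polydisc_subset hρ fun _ hy => (polydisc_eq_of_mem hy).subset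

theorem polydisc_subset_diff (hρ : ∀ s, 0 ≤ ρ' s) (hle : ∀ s, ρ' s ≤ ρ s)
    (hU : ∀ y ∈ U, polydisc ρ' y ⊆ U) (hy : y ∈ polydisc ρ x \ U) :
    polydisc ρ' y ⊆ polydisc ρ x \ U := fun z hz =>
  ⟨polydisc_subset_polydisc_of_mem hle hy.1 hz, fun hzU =>
    hy.2 (hU z hzU (polydisc_eq_of_mem hz ▸ mem_polydisc_self hρ y))⟩

section Measure

variable [Finite ι] [MeasurableSpace (ι → α)] [BorelSpace (ι → α)] {μ ν : Measure (ι → α)}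

/-- The polydiscs of polyradius `ρ` contained in `U` partition it. -/
theorem measure_le_of_forall_polydisc_le [TopologicalSpace.SeparableSpace α]
    (hρ : ∀ s, 0 < ρ s) (hU : ∀ y ∈ U, polydisc ρ y ⊆ U)
    (h : ∀ y ∈ U, μ (polydisc ρ y) ≤ ν (polydisc ρ y)) : μ U ≤ ν U := by
  let cells : Set (Set (ι → α)) := polydisc ρ '' U
  have hself (y : ι → α) : y ∈ polydisc ρ y := mem_polydisc_self (fun s => (hρ s).le) y
  have hdisj : cells.Pairwise Disjoint := by
    rintro _ ⟨y, -, rfl⟩ _ ⟨z, -, rfl⟩ hne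
    exact disjoint_left.2 fun w hwy hwz =>
      hne ((polydisc_eq_of_mem hwy).symm.trans (polydisc_eq_of_mem hwz))
  have hopen : ∀ B ∈ cells, IsOpen B := forall_mem_image.2 fun y _ => isOpen_polydisc hρ y
  have hcountable : cells.Countable :=
    PairwiseDisjoint.countable_of_isOpen (s := id) hdisj hopen
      (forall_mem_image.2 fun y _ => ⟨y, hself y⟩)
  have hunion : ⋃₀ cells = U := by
    refine (sUnion_subset (forall_mem_image.2 hU)).antisymm fun y hy => ?_
    exact ⟨_, mem_image_of_mem _ hy, hself y⟩
  have hmeas : ∀ B ∈ cells, MeasurableSet B := fun B hB => (hopen B hB).measurableSet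
  rw [← hunion, measure_sUnion hcountable hdisj hmeas, measure_sUnion hcountable hdisj hmeas]
  have hle : ∀ B ∈ cells, μ B ≤ ν B := forall_mem_image.2 h
  exact ENNReal.tsum_le_tsum fun B => hle B B.2

theorem exists_mem_diff_measure_polydisc_lt [TopologicalSpace.SeparableSpace α]
    [IsFiniteMeasure μ] {c : ℝ≥0∞}
    (hρ' : ∀ s, 0 < ρ' s) (hle : ∀ s, ρ' s ≤ ρ s) (hU : ∀ y ∈ U, polydisc ρ' y ⊆ U)
    (hhalf : 2 * μ (U ∩ polydisc ρ x) ≤ μ (polydisc ρ x))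
    (hx : ν (polydisc ρ x) < c * μ (polydisc ρ x)) :
    ∃ y ∈ polydisc ρ x \ U, ν (polydisc ρ' y) < 2 * c * μ (polydisc ρ' y) := by
  by_contra! hcon
  have hdiff : (2 * c) * μ (polydisc ρ x \ U) ≤ ν (polydisc ρ x \ U) := by
    refine measure_le_of_forall_polydisc_le (μ := (2 * c) • μ) hρ' (fun y hy => ?_) hcon
    exact polydisc_subset_diff (fun s => (hρ' s).le) hle hU hy
  have hmeas : MeasurableSet U := (isOpen_of_forall_polydisc_subset hρ' hU).measurableSet
  refine hx.not_ge ?_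
  calc c * μ (polydisc ρ x) ≤ c * (2 * μ (polydisc ρ x \ U)) := by
        gcongr; exact measure_le_two_mul_measure_diff hmeas hhalf
    _ = 2 * c * μ (polydisc ρ x \ U) := by ring
    _ ≤ ν (polydisc ρ x \ U) := hdiff
    _ ≤ ν (polydisc ρ x) := measure_mono sdiff_subset

theorem exists_forall_notMem_and_measure_polydisc_lt [CompactSpace α] [IsFiniteMeasure μ]
    {ρ : ℕ → ι → ℝ} {U : ℕ → Set (ι → α)} (hρ : ∀ k s, 0 < ρ k s) (hanti : Antitone ρ)
    (hU : ∀ k, ∀ y ∈ U k, polydisc (ρ (k + 1)) y ⊆ U k)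
    (hhalf : ∀ k x, 2 * μ (U k ∩ polydisc (ρ k) x) ≤ μ (polydisc (ρ k) x))
    (hx : ν (polydisc (ρ 0) x) < μ (polydisc (ρ 0) x)) :
    ∃ y, ∀ k, y ∉ U k ∧ ν (polydisc (ρ k) y) < 2 ^ k * μ (polydisc (ρ k) y) := by
  have hstep (k : ℕ) (z : {z // ν (polydisc (ρ k) z) < 2 ^ k * μ (polydisc (ρ k) z)}) :
      ∃ w : {w // ν (polydisc (ρ (k + 1)) w) < 2 ^ (k + 1) * μ (polydisc (ρ (k + 1)) w)},
        w.1 ∈ polydisc (ρ k) z.1 \ U k := by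
    obtain ⟨w, hwz, hw⟩ := exists_mem_diff_measure_polydisc_lt (hρ (k + 1))
      (hanti k.le_succ) (hU k) (hhalf k z) z.2
    exact ⟨⟨w, by rwa [pow_succ']⟩, hwz⟩
  choose next hnext using hstep
  let z (k : ℕ) : {z // ν (polydisc (ρ k) z) < 2 ^ k * μ (polydisc (ρ k) z)} :=
    Nat.rec ⟨x, by simpa using hx⟩ next k
  have hz (k : ℕ) : (z (k + 1)).1 ∈ polydisc (ρ k) (z k).1 \ U k := hnext k (z k)
  obtain ⟨y, hy⟩ := IsCompact.nonempty_iInter_of_sequence_nonempty_isCompact_isClosed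
    (fun k => polydisc (ρ k) (z k).1)
    (fun k => polydisc_subset_polydisc_of_mem (hanti k.le_succ) (hz k).1)
    (fun k => ⟨_, mem_polydisc_self (fun s => (hρ k s).le) _⟩)
    (isClosed_polydisc _ _).isCompact (fun k => isClosed_polydisc _ _)
  rw [mem_iInter] at hy
  refine ⟨y, fun k => ⟨fun hyU => (hz k).2 ?_, polydisc_eq_of_mem (hy k) ▸ (z k).2⟩⟩
  exact hU k y hyU (mem_polydisc_comm.1 (hy (k + 1)))

end Measure

end Polydisc

section LinearAlgebra

variable {n : Type*} [Fintype n] [DecidableEq n]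

theorem exists_ne_zero_forall_dotProduct_eq_zero_of_field {K : Type*} [Field K] {T : Set (n → K)}
    (hT : ∀ M : Matrix n n K, (∀ j, M j ∈ T) → M.det = 0) :
    ∃ a : n → K, a ≠ 0 ∧ ∀ v ∈ T, a ⬝ᵥ v = 0 := by
  have hspan : Submodule.span K T < ⊤ := by
    refine lt_top_iff_ne_top.2 fun htop => ?_
    obtain ⟨f, hfT, -, hf⟩ := Submodule.exists_fun_fin_finrank_span_eq K T
    have hcard : Module.finrank K (Submodule.span K T) = Fintype.card n := by
      rw [htop, finrank_top, Module.finrank_fintype_fun_eq_card]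
    let e : n ≃ Fin (Module.finrank K (Submodule.span K T)) :=
      Fintype.equivOfCardEq (by rw [hcard, Fintype.card_fin])
    have hunit : IsUnit (Matrix.of (f ∘ e)) :=
      Matrix.linearIndependent_rows_iff_isUnit.1 (hf.comp e e.injective)
    exact ((Matrix.isUnit_iff_isUnit_det _).1 hunit).ne_zero (hT _ fun j => hfT (e j))
  obtain ⟨f, hf, hker⟩ := Submodule.exists_le_ker_of_lt_top _ hspan
  refine ⟨(dotProductEquiv K n).symm f, by simpa using hf, fun v hv => ?_⟩
  rw [← dotProductEquiv_apply_apply, LinearEquiv.apply_symm_apply]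
  exact hker (Submodule.subset_span hv)

theorem exists_ne_zero_forall_dotProduct_eq_zero {R : Type*} [CommRing R] [IsDomain R]
    {T : Set (n → R)} (hT : ∀ M : Matrix n n R, (∀ j, M j ∈ T) → M.det = 0) :
    ∃ a : n → R, a ≠ 0 ∧ ∀ v ∈ T, a ⬝ᵥ v = 0 := by
  let K := FractionRing R
  have hinj : Function.Injective (algebraMap R K) := IsFractionRing.injective R K
  have hTK : ∀ M : Matrix n n K, (∀ j, M j ∈ (algebraMap R K ∘ ·) '' T) → M.det = 0 := by
    intro M hM
    choose M' hM'T hM' using hM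
    have hMM' : M = (algebraMap R K).mapMatrix (Matrix.of M') := funext fun j => (hM' j).symm
    have hdet : (Matrix.of M').det = 0 := hT _ hM'T
    rw [hMM', ← RingHom.map_det, hdet, map_zero]
  obtain ⟨α, hα, hαT⟩ := exists_ne_zero_forall_dotProduct_eq_zero_of_field hTK
  obtain ⟨b, hb⟩ := IsLocalization.exist_integer_multiples_of_finite (nonZeroDivisors R) α
  choose a ha using hb
  have hbα : algebraMap R K ∘ a = (b : R) • α := funext ha
  refine ⟨a, ?_, fun v hv => hinj ?_⟩
  · rintro rfl
    refine smul_ne_zero (nonZeroDivisors.coe_ne_zero b) hα ?_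
    rw [← hbα]
    exact funext fun _ => map_zero _
  · rw [RingHom.map_dotProduct, hbα, smul_dotProduct, hαT _ (mem_image_of_mem _ hv), smul_zero,
      map_zero]

variable {R : Type*} [NormedCommRing R] [NormOneClass R] [IsUltrametricDist R]

theorem norm_det_le_prod {M : Matrix n n R} {C : n → ℝ} (hM : ∀ j k, ‖M j k‖ ≤ C k) :
    ‖M.det‖ ≤ ∏ k, C k := by
  rcases isEmpty_or_nonempty n with hn | ⟨⟨j₀⟩⟩
  · simp
  have hC (k : n) : 0 ≤ C k := (norm_nonneg _).trans (hM j₀ k)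
  rw [Matrix.det_apply']
  refine IsUltrametricDist.norm_sum_le_of_forall_le_of_nonneg
    (Finset.prod_nonneg fun k _ => hC k) fun σ _ => ?_
  have hsign : ‖((Equiv.Perm.sign σ : ℤ) : R)‖ = 1 := by
    rcases Int.units_eq_one_or (Equiv.Perm.sign σ) with h | h <;> simp [h]
  calc ‖((Equiv.Perm.sign σ : ℤ) : R) * ∏ k, M (σ k) k‖
      ≤ ‖((Equiv.Perm.sign σ : ℤ) : R)‖ * ∏ k, ‖M (σ k) k‖ := by
        grw [norm_mul_le, Finset.norm_prod_le]
    _ ≤ ∏ k, C k := by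
        rw [hsign, one_mul]
        exact Finset.prod_le_prod (fun _ _ => norm_nonneg _) fun k _ => hM _ k

/-- Subtracting multiples of the column `none` from the other columns does not change the
determinant. -/
theorem norm_det_option_le_prod {M : Matrix (Option n) (Option n) R} {x : n → R} {C : n → ℝ}
    (hnone : ∀ j, ‖M j none‖ ≤ 1) (hsome : ∀ j s, ‖M j (some s) - M j none * x s‖ ≤ C s) :
    ‖M.det‖ ≤ ∏ s, C s := by
  let c : Option n → R := fun k => k.elim 0 x
  let M' : Matrix (Option n) (Option n) R := Matrix.of fun j k => M j k - c k * M j none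
  have hdet : M.det = M'.det := by
    rw [← Matrix.det_transpose M, ← Matrix.det_transpose M']
    refine Matrix.det_eq_of_forall_row_eq_smul_add_const c none rfl fun k j => ?_
    simp [M', c]
  have hM' : ∀ j k, ‖M' j k‖ ≤ k.elim 1 C
    | j, none => by simpa [M', c] using hnone j
    | j, some s => by simpa [M', c, mul_comm] using hsome j s
  simpa [hdet, Fintype.prod_option] using norm_det_le_prod hM'

end LinearAlgebra

section Halving

variable {ι A : Type*} [Fintype ι] [NormedCommRing A] [IsUltrametricDist A]
  {ρ ρ' : ι → ℝ} {x : ι → A} {a : ι → A}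

/-- The translation only moves the coordinate `s₀` in which `‖a s‖ * ρ' s` is maximal. -/
theorem exists_mem_polydisc_zero_forall_notMem_polydisc [NormMulClass A] (ha : a ≠ 0)
    (hρ' : ∀ s, 0 < ρ' s) (hρ : ∀ s, ∃ τ : A, ρ' s < ‖τ‖ ∧ ‖τ‖ ≤ ρ s) :
    ∃ t ∈ polydisc ρ 0, ∀ u, a ⬝ᵥ u = 0 → u ∉ polydisc ρ' t := by
  classical
  obtain ⟨s₁, hs₁⟩ := Function.ne_iff.1 ha
  have : Nonempty ι := ⟨s₁⟩
  obtain ⟨s₀, hmax⟩ := Finite.exists_max fun s => ‖a s‖ * ρ' s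
  have has₀ : 0 < ‖a s₀‖ := by
    refine pos_of_mul_pos_left (lt_of_lt_of_le ?_ (hmax s₁)) (hρ' s₀).le
    exact mul_pos (norm_pos_iff.2 hs₁) (hρ' s₁)
  obtain ⟨τ, hτ, hτρ⟩ := hρ s₀
  refine ⟨Pi.single s₀ τ, mem_polydisc_iff_norm_sub_le.2 fun s => ?_, fun u hau hu => ?_⟩
  · obtain ⟨τ', -, hτ'⟩ := hρ s
    rcases eq_or_ne s s₀ with rfl | hs
    · simpa using hτρ
    · simpa [hs] using (norm_nonneg τ').trans hτ'
  · have hle : ‖a ⬝ᵥ (u - Pi.single s₀ τ)‖ ≤ ‖a s₀‖ * ρ' s₀ := by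
      refine IsUltrametricDist.norm_sum_le_of_forall_le_of_nonneg (by have := hρ' s₀; positivity)
        fun s _ => (norm_mul_le _ _).trans (le_trans ?_ (hmax s))
      gcongr
      exact mem_polydisc_iff_norm_sub_le.1 hu s
    have hlt : ‖a s₀‖ * ρ' s₀ < ‖a s₀‖ * ‖τ‖ := by gcongr
    rw [dotProduct_sub, hau, dotProduct_single, zero_sub, norm_neg, norm_mul] at hle
    exact hle.not_gt hlt

variable [MeasurableSpace (ι → A)] [BorelSpace (ι → A)] {μ : Measure (ι → A)}
  [μ.IsAddLeftInvariant]

/-- Two disjoint translates of the neighbourhood of `S` fit into the polydisc. -/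
theorem two_mul_measure_biUnion_polydisc_le [NormMulClass A] {S : Set (ι → A)} (ha : a ≠ 0) {b : A}
    (hab : ∀ P ∈ S, a ⬝ᵥ P = b) (hS : S ⊆ polydisc ρ x)
    (hρ' : ∀ s, 0 < ρ' s) (hρ : ∀ s, ∃ τ : A, ρ' s < ‖τ‖ ∧ ‖τ‖ ≤ ρ s) :
    2 * μ (⋃ P ∈ S, polydisc ρ' P) ≤ μ (polydisc ρ x) := by
  obtain ⟨t, htρ, ht⟩ := exists_mem_polydisc_zero_forall_notMem_polydisc ha hρ' hρ
  have hle (s : ι) : ρ' s ≤ ρ s := let ⟨_, h₁, h₂⟩ := hρ s; (h₁.trans_le h₂).le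
  set D := ⋃ P ∈ S, polydisc ρ' P
  have hDopen : IsOpen D := isOpen_biUnion fun P _ => isOpen_polydisc hρ' P
  have hDρ : D ⊆ polydisc ρ x :=
    iUnion₂_subset fun P hP => polydisc_subset_polydisc_of_mem hle (hS hP)
  have htrans : (t + ·) ⁻¹' D ⊆ polydisc ρ x := by
    intro z hz
    rw [← polydisc_eq_of_mem (hDρ hz)]
    simpa [mem_polydisc_iff_norm_sub_le] using htρ
  have hdisj : Disjoint D ((t + ·) ⁻¹' D) := by
    rw [disjoint_left]
    intro z hz hzt
    obtain ⟨P, hP, hzP⟩ := mem_iUnion₂.1 hz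
    obtain ⟨Q, hQ, hzQ⟩ := mem_iUnion₂.1 hzt
    refine ht (Q - P) (by rw [dotProduct_sub, hab Q hQ, hab P hP, sub_self]) ?_
    rw [mem_polydisc_comm] at hzQ
    rw [mem_polydisc_iff_norm_sub_le] at hzP hzQ ⊢
    intro s
    calc ‖(Q - P) s - t s‖ = ‖(z s - P s) + (Q s - (t + z) s)‖ := by
          congr 1; simp only [Pi.sub_apply, Pi.add_apply]; ring
      _ ≤ max ‖z s - P s‖ ‖Q s - (t + z) s‖ := IsUltrametricDist.norm_add_le_max _ _
      _ ≤ ρ' s := max_le (hzP s) (hzQ s)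
  calc 2 * μ D = μ D + μ ((t + ·) ⁻¹' D) := by rw [measure_preimage_add, two_mul]
    _ = μ (D ∪ (t + ·) ⁻¹' D) := (measure_union hdisj
        (hDopen.preimage (continuous_const_add t)).measurableSet).symm
    _ ≤ μ (polydisc ρ x) := measure_mono (union_subset hDρ htrans)

end Halving

section Padic

variable {p : ℕ} [Fact p.Prime] {ι : Type*}

theorem one_le_abs_mul_norm_intCast {a : ℤ} (ha : a ≠ 0) : 1 ≤ |(a : ℝ)| * ‖(a : ℤ_[p])‖ := by
  have hp : (0 : ℝ) < p := by exact_mod_cast (Fact.out : p.Prime).pos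
  have hnorm := PadicInt.norm_eq_zpow_neg_valuation (p := p) (x := a) (by exact_mod_cast ha)
  have hdvd := PadicInt.norm_int_le_pow_iff_dvd.1 hnorm.le
  have hle : (p : ℝ) ^ (a : ℤ_[p]).valuation ≤ |(a : ℝ)| := by
    exact_mod_cast Int.le_of_dvd (abs_pos.2 ha) ((dvd_abs _ _).2 hdvd)
  rw [hnorm, zpow_neg, zpow_natCast, ← div_eq_mul_inv]
  exact (one_le_div (pow_pos hp _)).2 hle

theorem det_eq_zero_of_norm_sub_le [Fintype ι] [DecidableEq ι] {W : Matrix (Option ι) (Option ι) ℤ}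
    {x : ι → ℤ_[p]} {ρ : ι → ℝ} {H : ℝ} (hH : ∀ j k, |(W j k : ℝ)| ≤ H)
    (hx : ∀ j s, ‖(W j (some s) : ℤ_[p]) - W j none * x s‖ ≤ ρ s)
    (hρ : (Fintype.card ι + 1)! * H ^ (Fintype.card ι + 1) * ∏ s, ρ s < 1) : W.det = 0 := by
  by_contra hdet
  have harch : |(W.det : ℝ)| ≤ (Fintype.card ι + 1)! * H ^ (Fintype.card ι + 1) := by
    rw [Int.cast_det]
    simpa using Matrix.det_le (A := W.map (Int.cast : ℤ → ℝ)) (abv := AbsoluteValue.abs) hH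
  have hpadic : ‖(W.det : ℤ_[p])‖ ≤ ∏ s, ρ s := by
    rw [Int.cast_det]
    exact norm_det_option_le_prod (M := W.map (Int.cast : ℤ → ℤ_[p]))
      (fun j => (W j none : ℤ_[p]).norm_le_one) hx
  refine hρ.not_ge ((one_le_abs_mul_norm_intCast (p := p) hdet).trans ?_)
  exact mul_le_mul harch hpadic (norm_nonneg _) ((abs_nonneg _).trans harch)

/-- The height of the integer vector `(q, r)`. -/
noncomputable def height (q : ℤ) (r : ι → ℤ) : ℝ :=
  max |(q : ℝ)| (⨆ t, |(r t : ℝ)|)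

theorem abs_le_height_left (q : ℤ) (r : ι → ℤ) : |(q : ℝ)| ≤ height q r :=
  le_max_left _ _

theorem abs_le_height_right [Finite ι] (q : ℤ) (r : ι → ℤ) (t : ι) : |(r t : ℝ)| ≤ height q r :=
  (le_ciSup (finite_range fun t => |(r t : ℝ)|).bddAbove t).trans (le_max_right _ _)

theorem one_le_height {q : ℤ} (hq : q ≠ 0) (r : ι → ℤ) : 1 ≤ height q r :=
  le_trans (by exact_mod_cast Int.one_le_abs hq) (abs_le_height_left q r)

variable (p) in
/-- The points of `ℤ_p^ι` with rational coordinates `r s / q` for some integer vector `(q, r)` of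
height at most `H`. -/
def ratPoints (H : ℝ) : Set (ι → ℤ_[p]) :=
  {P | ∃ (q : ℤ) (r : ι → ℤ), q ≠ 0 ∧ height q r ≤ H ∧ ∀ s, (q : ℤ_[p]) * P s = r s}

/-- A `p`-adic version of Davenport's simplex lemma. -/
theorem exists_forall_dotProduct_eq_of_subset_ratPoints [Fintype ι] {x : ι → ℤ_[p]}
    {ρ : ι → ℝ} {H : ℝ} {S : Set (ι → ℤ_[p])} (hne : S.Nonempty) (hrat : S ⊆ ratPoints p H)
    (hS : S ⊆ polydisc ρ x)
    (hρ : (Fintype.card ι + 1)! * H ^ (Fintype.card ι + 1) * ∏ s, ρ s < 1) :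
    ∃ a : ι → ℤ_[p], a ≠ 0 ∧ ∃ b, ∀ P ∈ S, a ⬝ᵥ P = b := by
  classical
  choose! q r hq hqr hP using show ∀ P ∈ S, P ∈ ratPoints p H from hrat
  let lift (P : ι → ℤ_[p]) : Option ι → ℤ := fun k => k.elim (q P) (r P)
  have hdet : ∀ M : Matrix (Option ι) (Option ι) ℤ_[p],
      (∀ j, M j ∈ (fun P k => (lift P k : ℤ_[p])) '' S) → M.det = 0 := by
    intro M hM
    choose P hPS hPM using hM
    let W : Matrix (Option ι) (Option ι) ℤ := Matrix.of (lift ∘ P)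
    have hW : W.det = 0 := by
      refine det_eq_zero_of_norm_sub_le (x := x) (fun j k => ?_) (fun j s => ?_) hρ
      · refine le_trans ?_ (hqr (P j) (hPS j))
        cases k with
        | none => exact abs_le_height_left _ _
        | some s => exact abs_le_height_right _ _ s
      · calc ‖(r (P j) s : ℤ_[p]) - q (P j) * x s‖ = ‖(q (P j) : ℤ_[p])‖ * ‖P j s - x s‖ := by
              rw [← hP (P j) (hPS j), ← mul_sub, norm_mul]
          _ ≤ 1 * ρ s := by
              gcongr
              · exact PadicInt.norm_le_one _
              · simpa [dist_eq_norm] using mem_polydisc.1 (hS (hPS j)) s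
          _ = ρ s := one_mul _
    have hMW : M = W.map Int.cast := funext fun j => (hPM j).symm
    rw [hMW, ← Int.cast_det, hW, Int.cast_zero]
  obtain ⟨A, hA, hAS⟩ := exists_ne_zero_forall_dotProduct_eq_zero hdet
  have heq (P) (hPS : P ∈ S) : (fun s => A (some s)) ⬝ᵥ P = -A none := by
    have hqP : (q P : ℤ_[p]) ≠ 0 := by exact_mod_cast hq P hPS
    have hAP : A none * q P + q P * ∑ s, A (some s) * P s = 0 := by
      simpa [dotProduct, Fintype.sum_option, lift, ← hP P hPS, Finset.mul_sum, mul_left_comm]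
        using hAS _ (mem_image_of_mem _ hPS)
    exact mul_left_cancel₀ hqP (by rw [dotProduct]; linear_combination hAP)
  refine ⟨fun s => A (some s), fun hA0 => hA ?_, _, heq⟩
  obtain ⟨P, hPS⟩ := hne
  have hAnone : A none = 0 := by simpa [hA0] using heq P hPS
  exact funext fun k => k.casesOn hAnone (congrFun hA0)

variable (p) in
/-- The union of the polydiscs of polyradius `ρ` around the rational points of height at most
`H`. -/
def ratNhd (ρ : ι → ℝ) (H : ℝ) : Set (ι → ℤ_[p]) :=
  ⋃ P ∈ ratPoints p H, polydisc ρ P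

theorem polydisc_subset_ratNhd {ρ : ι → ℝ} {H : ℝ} {y : ι → ℤ_[p]} (hy : y ∈ ratNhd p ρ H) :
    polydisc ρ y ⊆ ratNhd p ρ H := by
  obtain ⟨P, hP, hyP⟩ := mem_iUnion₂.1 hy
  exact polydisc_eq_of_mem hyP ▸ subset_biUnion_of_mem (u := polydisc ρ) hP

theorem two_mul_measure_ratNhd_inter_polydisc_le [Fintype ι] [MeasurableSpace (ι → ℤ_[p])]
    [BorelSpace (ι → ℤ_[p])] {μ : Measure (ι → ℤ_[p])} [μ.IsAddLeftInvariant] {ρ ρ' : ι → ℝ}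
    {H : ℝ} (x : ι → ℤ_[p]) (hρ' : ∀ s, 0 < ρ' s)
    (hρ : ∀ s, ∃ τ : ℤ_[p], ρ' s < ‖τ‖ ∧ ‖τ‖ ≤ ρ s)
    (hH : (Fintype.card ι + 1)! * H ^ (Fintype.card ι + 1) * ∏ s, ρ s < 1) :
    2 * μ (ratNhd p ρ' H ∩ polydisc ρ x) ≤ μ (polydisc ρ x) := by
  have hle (s : ι) : ρ' s ≤ ρ s := let ⟨_, h₁, h₂⟩ := hρ s; (h₁.trans_le h₂).le
  let S := ratPoints p H ∩ polydisc ρ x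
  have hsub : ratNhd p ρ' H ∩ polydisc ρ x ⊆ ⋃ P ∈ S, polydisc ρ' P := by
    rintro y ⟨hy, hyx⟩
    obtain ⟨P, hP, hyP⟩ := mem_iUnion₂.1 hy
    have hPx : P ∈ polydisc ρ x :=
      polydisc_subset_polydisc_of_mem hle hyx (mem_polydisc_comm.1 hyP)
    exact mem_biUnion ⟨hP, hPx⟩ hyP
  grw [hsub]
  rcases S.eq_empty_or_nonempty with hS | hS
  · simp [hS]
  · obtain ⟨a, ha, b, hab⟩ := exists_forall_dotProduct_eq_of_subset_ratPoints hS
      inter_subset_left inter_subset_right hH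
    exact two_mul_measure_biUnion_polydisc_le ha hab inter_subset_right hρ' hρ

theorem exists_lt_norm_and_norm_le {r' r : ℝ} (hr' : 0 < r') (hr : r ≤ 1) (h : p * r' < r) :
    ∃ τ : ℤ_[p], r' < ‖τ‖ ∧ ‖τ‖ ≤ r := by
  have hp : (1 : ℝ) < p := by exact_mod_cast (Fact.out : p.Prime).one_lt
  have hp₀ : (0 : ℝ) < p := one_pos.trans hp
  obtain ⟨n, hlt, hle⟩ := exists_nat_pow_near_of_lt_one ((mul_pos hp₀ hr').trans h) hr
    (inv_pos.2 hp₀) (inv_lt_one_of_one_lt₀ hp)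
  refine ⟨p ^ (n + 1), ?_, ?_⟩
  · rw [norm_pow, PadicInt.norm_p, pow_succ, ← div_eq_mul_inv, lt_div_iff₀' hp₀]
    exact h.trans_le hle
  · rw [norm_pow, PadicInt.norm_p]
    exact hlt.le

section Polyradius

variable {R : ℝ} {i : ι → ℝ}

/-- The polyradius `(R ^ (-(1 + i s) * k))ₛ` of the polydiscs of generation `k`. -/
noncomputable def polyradius (R : ℝ) (i : ι → ℝ) (k : ℕ) (s : ι) : ℝ :=
  (R⁻¹ ^ k) ^ (1 + i s)

theorem polyradius_pos (hR : 0 < R) (i : ι → ℝ) (k : ℕ) (s : ι) : 0 < polyradius R i k s := by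
  unfold polyradius
  positivity

theorem polyradius_zero (R : ℝ) (i : ι → ℝ) (s : ι) : polyradius R i 0 s = 1 := by
  simp [polyradius]

theorem inv_pow_le_one (hR : 1 ≤ R) (k : ℕ) : R⁻¹ ^ k ≤ 1 :=
  pow_le_one₀ (by positivity) (inv_le_one_of_one_le₀ hR)

theorem polyradius_succ_le (hR : 1 ≤ R) (hi : ∀ s, 0 ≤ i s) (k : ℕ) (s : ι) :
    polyradius R i (k + 1) s ≤ R⁻¹ * polyradius R i k s := by
  have hR₀ : 0 < R⁻¹ := by positivity
  rw [polyradius, polyradius, pow_succ', Real.mul_rpow hR₀.le (by positivity)]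
  gcongr
  exact Real.rpow_le_self_of_le_one hR₀.le (inv_le_one_of_one_le₀ hR)
    (le_add_of_nonneg_right (hi s))

theorem antitone_polyradius (hR : 1 ≤ R) (hi : ∀ s, 0 ≤ i s) : Antitone (polyradius R i) :=
  antitone_nat_of_succ_le fun k s => (polyradius_succ_le hR hi k s).trans
    (mul_le_of_le_one_left (polyradius_pos (one_pos.trans_le hR) i k s).le
      (inv_le_one_of_one_le₀ hR))

theorem polyradius_le (hR : 1 ≤ R) (hi : ∀ s, 0 ≤ i s) (k : ℕ) (s : ι) :
    polyradius R i k s ≤ R⁻¹ ^ k :=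
  Real.rpow_le_self_of_le_one (by positivity) (inv_pow_le_one hR k)
    (le_add_of_nonneg_right (hi s))

theorem exists_lt_norm_and_norm_le_polyradius (hR : p < R) (hi : ∀ s, 0 ≤ i s) (k : ℕ) (s : ι) :
    ∃ τ : ℤ_[p], polyradius R i (k + 1) s < ‖τ‖ ∧ ‖τ‖ ≤ polyradius R i k s := by
  have hp : (1 : ℝ) < p := by exact_mod_cast (Fact.out : p.Prime).one_lt
  have hR₁ : 1 ≤ R := (hp.trans hR).le
  have hpos : 0 < polyradius R i (k + 1) s := polyradius_pos (one_pos.trans_le hR₁) i _ s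
  refine exists_lt_norm_and_norm_le hpos
    ((polyradius_le hR₁ hi k s).trans (inv_pow_le_one hR₁ k)) ?_
  calc p * polyradius R i (k + 1) s < R * polyradius R i (k + 1) s := by gcongr
    _ ≤ polyradius R i k s := by
        rw [← le_inv_mul_iff₀ (one_pos.trans_le hR₁)]
        exact polyradius_succ_le hR₁ hi k s

theorem pow_mul_prod_polyradius_le_one [Fintype ι] (hR : 1 ≤ R) (hsum : 1 ≤ ∑ s, i s) (k : ℕ) :
    (R ^ k) ^ (Fintype.card ι + 1) * ∏ s, polyradius R i k s ≤ 1 := by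
  have hprod : ∏ s, polyradius R i k s ≤ (R⁻¹ ^ k) ^ (Fintype.card ι + 1) := by
    simp_rw [polyradius]
    rw [← Real.rpow_sum_of_pos (by positivity), ← Real.rpow_natCast (R⁻¹ ^ k)]
    refine Real.rpow_le_rpow_of_exponent_ge (by positivity) (inv_pow_le_one hR k) ?_
    simpa [Finset.sum_add_distrib] using hsum
  calc (R ^ k) ^ (Fintype.card ι + 1) * ∏ s, polyradius R i k s
      ≤ (R ^ k) ^ (Fintype.card ι + 1) * (R⁻¹ ^ k) ^ (Fintype.card ι + 1) := by gcongr
    _ = 1 := by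
        rw [← mul_pow, ← mul_pow, mul_inv_cancel₀ (by positivity), one_pow, one_pow]

end Polyradius

section BadSet

variable {R c : ℝ} {i : ι → ℝ} {x : ι → ℤ_[p]} {q : ℤ} {r : ι → ℤ}

/-- The integer vector `(q, r)` satisfies the inequality defining `badSet` at `x`, with
constant `c`. -/
def IsBadAt (i : ι → ℝ) (c : ℝ) (x : ι → ℤ_[p]) (q : ℤ) (r : ι → ℤ) : Prop :=
  ∃ s, c / height q r ≤ ‖(q : ℤ_[p]) * x s - r s‖ ^ (1 / (1 + i s))

variable (p) in
/-- The set `Bad_{ℤ_p}(i)` of `i`-badly approximable points of `ℤ_p^ι`. -/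
def badSet (i : ι → ℝ) : Set (ι → ℤ_[p]) :=
  {x | ∃ c, 0 < c ∧ ∀ r q, q ≠ 0 → IsBadAt i c x q r}

theorem isBadAt_of_norm_eq_one (hc : c ≤ 1) (hq : q ≠ 0) {s : ι}
    (hs : ‖(q : ℤ_[p]) * x s - r s‖ = 1) : IsBadAt i c x q r := by
  refine ⟨s, ?_⟩
  rw [hs, Real.one_rpow]
  exact div_le_one_of_le₀ (hc.trans (one_le_height hq r)) (one_pos.le.trans (one_le_height hq r))

theorem height_mul (m q : ℤ) (r : ι → ℤ) :
    height (m * q) (fun s => m * r s) = |(m : ℝ)| * height q r := by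
  rw [height, height, mul_max_of_nonneg _ _ (abs_nonneg _), Real.mul_iSup_of_nonneg (abs_nonneg _)]
  simp only [Int.cast_mul, abs_mul]

theorem IsBadAt.prime_mul (hi : ∀ s, 0 ≤ i s) (h : IsBadAt i c x q r) :
    IsBadAt i c x (p * q) (fun s => p * r s) := by
  obtain ⟨s, hs⟩ := h
  have hp : (1 : ℝ) ≤ p := by exact_mod_cast (Fact.out : p.Prime).one_le
  have hi' : 0 < 1 + i s := by linarith [hi s]
  have hnorm : ‖((p * q : ℤ) : ℤ_[p]) * x s - (p * r s : ℤ)‖ =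
      (p : ℝ)⁻¹ * ‖(q : ℤ_[p]) * x s - r s‖ := by
    rw [← PadicInt.norm_p, ← norm_mul]
    push_cast
    ring_nf
  have hinv : (p : ℝ)⁻¹ ≤ (p : ℝ)⁻¹ ^ (1 / (1 + i s)) :=
    Real.self_le_rpow_of_le_one (by positivity) (inv_le_one_of_one_le₀ hp)
      ((div_le_one hi').2 (le_add_of_nonneg_right (hi s)))
  refine ⟨s, ?_⟩
  rw [hnorm, height_mul, Real.mul_rpow (by positivity) (norm_nonneg _), Int.cast_natCast,
    Nat.abs_cast, div_mul_eq_div_div_swap, div_eq_inv_mul]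
  grw [hs, hinv]

theorem norm_mul_sub_eq_one {m : ℤ} (hq : (p : ℤ) ∣ q) (hm : ¬(p : ℤ) ∣ m) (z : ℤ_[p]) :
    ‖(q : ℤ_[p]) * z - m‖ = 1 := by
  have hqz : ‖(q : ℤ_[p]) * z‖ < 1 := by
    rw [norm_mul]
    exact mul_lt_one_of_nonneg_of_lt_one_left (norm_nonneg _)
      ((PadicInt.norm_int_lt_one_iff_dvd q).2 hq) z.norm_le_one
  have hm : ‖(-m : ℤ_[p])‖ = 1 := by
    rw [norm_neg]
    exact (PadicInt.norm_le_one _).antisymm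
      (not_lt.1 (mt (PadicInt.norm_int_lt_one_iff_dvd m).1 hm))
  rw [sub_eq_add_neg, IsUltrametricDist.norm_add_eq_max_of_norm_ne_norm (hm ▸ hqz.ne), hm,
    max_eq_right hqz.le]

theorem isBadAt_of_forall_not_dvd (hi : ∀ s, 0 ≤ i s) (hc : c ≤ 1)
    (h : ∀ q r, ¬(p : ℤ) ∣ q → IsBadAt i c x q r) (hq : q ≠ 0) : IsBadAt i c x q r := by
  have hp : Prime (p : ℤ) := Nat.prime_iff_prime_int.1 Fact.out
  obtain ⟨n, q', hq', rfl⟩ := WfDvdMonoid.max_power_factor hq hp.irreducible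
  clear hq
  have hne (n : ℕ) : (p : ℤ) ^ n * q' ≠ 0 :=
    mul_ne_zero (pow_ne_zero n hp.ne_zero) fun h => hq' (h ▸ dvd_zero _)
  induction n generalizing r with
  | zero => exact h _ _ (by simpa using hq')
  | succ n ih =>
    by_cases hr : ∀ s, (p : ℤ) ∣ r s
    · choose r' hr' using hr
      obtain rfl : r = fun s => p * r' s := funext hr'
      rw [pow_succ', mul_assoc]
      exact ih.prime_mul hi
    · obtain ⟨s, hs⟩ := not_forall.1 hr
      refine isBadAt_of_norm_eq_one hc (hne _) (norm_mul_sub_eq_one ?_ hs (x s))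
      exact (dvd_pow_self _ n.succ_ne_zero).mul_right q'

/-- The point `r / q` lies in `ratPoints p (h * R ^ k)` for some `k` with
`h * R ^ k ≤ R * height q r`. -/
theorem isBadAt_of_forall_notMem_ratNhd {h : ℝ} (hR : 1 < R) (hh : 0 < h) (hh₁ : h ≤ 1)
    (hi : ∀ s, 0 ≤ i s) (hx : ∀ k, x ∉ ratNhd p (polyradius R i (k + 1)) (h * R ^ k))
    (hq : ¬(p : ℤ) ∣ q) : IsBadAt i (h / R ^ 2) x q r := by
  have hR₀ : 0 < R := one_pos.trans hR
  have hq₀ : q ≠ 0 := fun h => hq (h ▸ dvd_zero _)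
  have hqnorm : ‖(q : ℤ_[p])‖ = 1 := (PadicInt.norm_le_one _).antisymm
    (not_lt.1 (mt (PadicInt.norm_int_lt_one_iff_dvd q).1 hq))
  have hH : 1 ≤ height q r := one_le_height hq₀ r
  obtain ⟨n, hn, hn'⟩ := exists_nat_pow_near (one_le_div hh |>.2 (hh₁.trans hH)) hR
  obtain ⟨P, hP⟩ : ∃ P : ι → ℤ_[p], ∀ s, (q : ℤ_[p]) * P s = r s := by
    obtain ⟨u, hu⟩ := PadicInt.isUnit_iff.2 hqnorm
    exact ⟨fun s => ↑u⁻¹ * r s, fun s => by rw [← hu, Units.mul_inv_cancel_left]⟩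
  have hPrat : P ∈ ratPoints p (h * R ^ (n + 1)) :=
    ⟨q, r, hq₀, ((div_lt_iff₀' hh).1 hn').le, hP⟩
  have hxP : x ∉ polydisc (polyradius R i (n + 2)) P := fun hxP =>
    hx (n + 1) (mem_biUnion hPrat hxP)
  obtain ⟨s, hs⟩ : ∃ s, polyradius R i (n + 2) s < ‖x s - P s‖ := by
    simpa [mem_polydisc_iff_norm_sub_le] using hxP
  have hi' : 0 < 1 + i s := by linarith [hi s]
  refine ⟨s, ?_⟩
  calc h / R ^ 2 / height q r = (R ^ 2 * (height q r / h))⁻¹ := by field_simp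
    _ ≤ (R ^ 2 * R ^ n)⁻¹ := by gcongr
    _ = polyradius R i (n + 2) s ^ (1 / (1 + i s)) := by
        rw [polyradius, one_div, Real.rpow_rpow_inv (by positivity) hi'.ne', inv_pow, pow_add,
          mul_comm]
    _ ≤ ‖x s - P s‖ ^ (1 / (1 + i s)) :=
        Real.rpow_le_rpow (polyradius_pos hR₀ i _ s).le hs.le (by positivity)
    _ = ‖(q : ℤ_[p]) * x s - r s‖ ^ (1 / (1 + i s)) := by
        rw [← hP, ← mul_sub, norm_mul, hqnorm, one_mul]

theorem mem_badSet_of_forall_notMem_ratNhd {h : ℝ} (hR : 1 < R) (hh : 0 < h)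
    (hh₁ : h ≤ 1) (hi : ∀ s, 0 ≤ i s)
    (hx : ∀ k, x ∉ ratNhd p (polyradius R i (k + 1)) (h * R ^ k)) : x ∈ badSet p i := by
  have hR₂ : 0 < R ^ 2 := pow_pos (one_pos.trans hR) 2
  have hc : h / R ^ 2 ≤ 1 := div_le_one_of_le₀ (hh₁.trans (one_le_pow₀ hR.le)) hR₂.le
  exact ⟨h / R ^ 2, div_pos hh hR₂, fun r q => isBadAt_of_forall_not_dvd hi hc fun q r =>
    isBadAt_of_forall_notMem_ratNhd hR hh hh₁ hi hx⟩

end BadSet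

section Reduction

variable (p) in
/-- Coordinatewise reduction modulo `p ^ n`, whose fibres are the closed balls of radius
`p ^ (-n)`. -/
noncomputable def reduction (ι : Type*) (n : ℕ) : (ι → ℤ_[p]) →+ (ι → ZMod (p ^ n)) :=
  (PadicInt.toZModPow n : ℤ_[p] →+* ZMod (p ^ n)).toAddMonoidHom.compLeft ι

theorem reduction_surjective (n : ℕ) : Function.Surjective (reduction p ι n) :=
  (ZMod.ringHom_surjective (PadicInt.toZModPow n : ℤ_[p] →+* ZMod (p ^ n))).comp_left

variable [Fintype ι]

theorem reduction_eq_reduction_iff {n : ℕ} {x y : ι → ℤ_[p]} :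
    reduction p ι n y = reduction p ι n x ↔ y ∈ closedBall x ((p : ℝ)⁻¹ ^ n) := by
  have hcoord (s : ι) : PadicInt.toZModPow n (y s) = PadicInt.toZModPow n (x s) ↔
      dist (y s) (x s) ≤ (p : ℝ)⁻¹ ^ n := by
    rw [← sub_eq_zero, ← map_sub, ← RingHom.mem_ker, PadicInt.ker_toZModPow,
      ← PadicInt.norm_le_pow_iff_mem_span_pow, zpow_neg, zpow_natCast, ← inv_pow, dist_eq_norm]
  rw [mem_closedBall, dist_pi_le_iff (by positivity), funext_iff]
  exact forall_congr' hcoord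

theorem card_mul_measure_closedBall [MeasurableSpace (ι → ℤ_[p])] [BorelSpace (ι → ℤ_[p])]
    (μ : Measure (ι → ℤ_[p])) [μ.IsAddLeftInvariant] (x : ι → ℤ_[p]) (n : ℕ) :
    ((p : ℝ≥0∞) ^ n) ^ Fintype.card ι * μ (closedBall x ((p : ℝ)⁻¹ ^ n)) = μ univ := by
  have : NeZero p := ⟨(Fact.out : p.Prime).ne_zero⟩
  have hker : ((reduction p ι n).ker : Set (ι → ℤ_[p])) = closedBall 0 ((p : ℝ)⁻¹ ^ n) := by
    ext y
    rw [← reduction_eq_reduction_iff, map_zero]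
    rfl
  have hindex : (reduction p ι n).ker.index = (p ^ n) ^ Fintype.card ι := by
    rw [AddSubgroup.index_ker, AddMonoidHom.range_eq_top.2 (reduction_surjective n)]
    simp only [AddSubgroup.card_top, Nat.card_fun, Nat.card_eq_fintype_card, ZMod.card]
  have : (reduction p ι n).ker.FiniteIndex := ⟨by rw [hindex]; exact NeZero.ne _⟩
  have h := (reduction p ι n).ker.index_mul_measure
    (hker ▸ isClosed_closedBall.measurableSet) μ
  rw [hindex, hker] at h
  rw [← h, ← measure_preimage_add μ x, preimage_add_closedBall, sub_self]
  push_cast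
  rfl

theorem measure_closedBall_le [MeasurableSpace (ι → ℤ_[p])] [BorelSpace (ι → ℤ_[p])]
    (μ : Measure (ι → ℤ_[p])) [μ.IsAddLeftInvariant] [IsProbabilityMeasure μ] (x : ι → ℤ_[p])
    {δ : ℝ} (hδ : 0 < δ) (hδ₁ : δ ≤ 1) :
    μ (closedBall x δ) ≤ ENNReal.ofReal ((p * δ) ^ Fintype.card ι) := by
  have hp : (1 : ℝ) < p := by exact_mod_cast (Fact.out : p.Prime).one_lt
  obtain ⟨n, hn, hn'⟩ := exists_nat_pow_near_of_lt_one hδ hδ₁ (inv_pos.2 (one_pos.trans hp))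
    (inv_lt_one_of_one_lt₀ hp)
  have hpδ : (p : ℝ)⁻¹ ^ n ≤ p * δ := by
    rw [pow_succ, mul_inv_lt_iff₀ (one_pos.trans hp), mul_comm] at hn
    exact hn.le
  have hball : μ (closedBall x ((p : ℝ)⁻¹ ^ n)) =
      ENNReal.ofReal (((p : ℝ)⁻¹ ^ n) ^ Fintype.card ι) := by
    rw [ENNReal.eq_inv_of_mul_eq_one_left
      ((mul_comm _ _).trans ((card_mul_measure_closedBall μ x n).trans measure_univ)),
      inv_pow, inv_pow, ENNReal.ofReal_inv_of_pos (by positivity)]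
    norm_cast
  calc μ (closedBall x δ) ≤ μ (closedBall x ((p : ℝ)⁻¹ ^ n)) :=
        measure_mono (closedBall_subset_closedBall hn')
    _ ≤ ENNReal.ofReal ((p * δ) ^ Fintype.card ι) := by rw [hball]; gcongr

theorem ediam_preimage_reduction_le (n : ℕ) (z : ι → ZMod (p ^ n)) :
    ediam (reduction p ι n ⁻¹' {z}) ≤ (p : ℝ≥0∞)⁻¹ ^ n := by
  have hp : (0 : ℝ) < p := by exact_mod_cast (Fact.out : p.Prime).pos
  refine ediam_le fun x hx y hy => ?_
  have hxy := reduction_eq_reduction_iff.1 (hx.trans hy.symm)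
  rw [← ENNReal.ofReal_natCast, ← ENNReal.ofReal_inv_of_pos hp,
    ← ENNReal.ofReal_pow (by positivity), edist_dist]
  exact ENNReal.ofReal_le_ofReal hxy

theorem dimH_le_card (S : Set (ι → ℤ_[p])) : dimH S ≤ Fintype.card ι := by
  classical
  borelize (ι → ℤ_[p])
  have : NeZero p := ⟨(Fact.out : p.Prime).ne_zero⟩
  have hp : (1 : ℝ≥0∞) < p := by exact_mod_cast (Fact.out : p.Prime).one_lt
  have hsum (n : ℕ) : ∑ z : ι → ZMod (p ^ n), ediam (reduction p ι n ⁻¹' {z}) ^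
      ((Fintype.card ι : ℝ≥0) : ℝ) ≤ 1 := by
    calc ∑ z : ι → ZMod (p ^ n), ediam (reduction p ι n ⁻¹' {z}) ^ ((Fintype.card ι : ℝ≥0) : ℝ)
        ≤ ∑ _ : ι → ZMod (p ^ n), ((p : ℝ≥0∞)⁻¹ ^ n) ^ Fintype.card ι := by
          gcongr with z
          grw [ediam_preimage_reduction_le]
          simp
      _ = 1 := by
          simp only [Finset.sum_const, Finset.card_univ, Fintype.card_fun, ZMod.card, nsmul_eq_mul]
          push_cast
          rw [← mul_pow, ← mul_pow,
            ENNReal.mul_inv_cancel (one_pos.trans hp).ne' (ENNReal.natCast_ne_top p),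
            one_pow, one_pow]
  have hle : μH[(Fintype.card ι : ℝ≥0)] S ≤ 1 := by
    refine (Measure.hausdorffMeasure_le_liminf_sum _ S (fun n => (p : ℝ≥0∞)⁻¹ ^ n)
      (ENNReal.tendsto_pow_atTop_nhds_zero_of_lt_one (ENNReal.inv_lt_one.2 hp))
      (fun n (z : ι → ZMod (p ^ n)) => reduction p ι n ⁻¹' {z})
      (Filter.Eventually.of_forall ediam_preimage_reduction_le)
      (Filter.Eventually.of_forall fun n x _ => mem_iUnion.2 ⟨_, rfl⟩)).trans ?_
    exact (Filter.liminf_le_liminf (Filter.Eventually.of_forall hsum)).trans_eq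
      (Filter.liminf_const 1)
  exact_mod_cast dimH_le_of_hausdorffMeasure_ne_top (hle.trans_lt ENNReal.one_lt_top).ne

end Reduction

section LowerBound

variable [Fintype ι] [MeasurableSpace (ι → ℤ_[p])] [BorelSpace (ι → ℤ_[p])]
  (μ : Measure (ι → ℤ_[p])) [μ.IsAddLeftInvariant] {i : ι → ℝ}

theorem two_mul_measure_ratNhd_inter_polydisc_polyradius_le {R h : ℝ} (hR : p < R)
    (hi : ∀ s, 0 ≤ i s) (hsum : 1 ≤ ∑ s, i s) (hh : 0 ≤ h)
    (hcard : (Fintype.card ι + 1)! * h ^ (Fintype.card ι + 1) < 1) (k : ℕ) (x : ι → ℤ_[p]) :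
    2 * μ (ratNhd p (polyradius R i (k + 1)) (h * R ^ k) ∩ polydisc (polyradius R i k) x) ≤
      μ (polydisc (polyradius R i k) x) := by
  have hR₁ : 1 ≤ R := le_trans (by exact_mod_cast (Fact.out : p.Prime).one_le) hR.le
  refine two_mul_measure_ratNhd_inter_polydisc_le x
    (polyradius_pos (one_pos.trans_le hR₁) i (k + 1))
    (exists_lt_norm_and_norm_le_polyradius hR hi k) ?_
  calc (Fintype.card ι + 1)! * (h * R ^ k) ^ (Fintype.card ι + 1) * ∏ s, polyradius R i k s
      = (Fintype.card ι + 1)! * h ^ (Fintype.card ι + 1) *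
          ((R ^ k) ^ (Fintype.card ι + 1) * ∏ s, polyradius R i k s) := by rw [mul_pow]; ring
    _ ≤ (Fintype.card ι + 1)! * h ^ (Fintype.card ι + 1) :=
        mul_le_of_le_one_right (by positivity) (pow_mul_prod_polyradius_le_one hR₁ hsum k)
    _ < 1 := hcard

theorem exists_mem_badSet_forall_notMem_closedBall [IsProbabilityMeasure μ]
    (hi : ∀ s, 0 ≤ i s) (hsum : 1 ≤ ∑ s, i s) {ε : ℝ} (hε : 0 < ε) {u : ℕ → ι → ℤ_[p]}
    {δ : ℕ → ℝ} (hδ : ∀ j, 0 < δ j) (hδ₁ : ∀ j, δ j ≤ 1)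
    (hμ : ∑' j, ENNReal.ofReal (2 * δ j ^ (-ε)) * μ (closedBall (u j) (δ j)) < 1) :
    ∃ x ∈ badSet p i, ∀ j, x ∉ closedBall (u j) (δ j) := by
  obtain ⟨R, hpR, hRε⟩ : ∃ R : ℝ, p < R ∧ 2 ≤ R ^ ε :=
    ((Filter.eventually_gt_atTop _).and ((tendsto_rpow_atTop hε).eventually_ge_atTop 2)).exists
  have hR : 1 < R := lt_trans (by exact_mod_cast (Fact.out : p.Prime).one_lt) hpR
  obtain ⟨h, hh, hh₁, hcard⟩ :=
    exists_pos_le_one_mul_pow_lt_one ((Fintype.card ι + 1)! : ℝ) (Fintype.card ι).succ_ne_zero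
  let w (j : ℕ) : ℝ≥0∞ := ENNReal.ofReal (2 * δ j ^ (-ε))
  let ν : Measure (ι → ℤ_[p]) := Measure.sum fun j => w j • μ.restrict (closedBall (u j) (δ j))
  have hunit : polydisc (polyradius R i 0) 0 = (univ : Set (ι → ℤ_[p])) :=
    eq_univ_of_forall fun x => mem_polydisc_iff_norm_sub_le.2 fun s => by
      simpa [polyradius_zero] using (x s).norm_le_one
  have hν : ν (polydisc (polyradius R i 0) 0) < μ (polydisc (polyradius R i 0) 0) := by
    simpa [hunit, ν, w] using hμ
  obtain ⟨x, hx⟩ := exists_forall_notMem_and_measure_polydisc_lt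
    (polyradius_pos (one_pos.trans hR) i) (antitone_polyradius hR.le hi)
    (fun k y => polydisc_subset_ratNhd (H := h * R ^ k))
    (two_mul_measure_ratNhd_inter_polydisc_polyradius_le μ hpR hi hsum hh.le hcard) hν
  refine ⟨x, mem_badSet_of_forall_notMem_ratNhd hR hh hh₁ hi fun k => (hx k).1, fun j hxj => ?_⟩
  obtain ⟨k, hkδ, hk⟩ := exists_inv_pow_le_and_two_pow_le hR hε.le hRε (hδ j) (hδ₁ j)
  have hsub : polydisc (polyradius R i k) x ⊆ closedBall (u j) (δ j) := by
    rw [IsUltrametricDist.closedBall_eq_of_mem hxj]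
    exact polydisc_subset_closedBall (hδ j).le
      (fun s => (polyradius_le hR.le hi k s).trans hkδ) x
  have hkw : 2 ^ k ≤ w j := by
    rw [← ENNReal.ofReal_ofNat 2, ← ENNReal.ofReal_pow zero_le_two]
    exact ENNReal.ofReal_le_ofReal hk
  refine (hx k).2.not_ge ?_
  calc 2 ^ k * μ (polydisc (polyradius R i k) x) ≤ w j * μ (polydisc (polyradius R i k) x) := by
        gcongr
    _ ≤ ν (polydisc (polyradius R i k) x) :=
        mul_measure_le_sum_smul_restrict (isClosed_polydisc _ _).measurableSet hsub

theorem hausdorffMeasure_badSet_ne_zero (hi : ∀ s, 0 ≤ i s) (hsum : 1 ≤ ∑ s, i s) {d : ℝ}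
    (hd : 0 < d) (hd' : d < Fintype.card ι) : μH[d] (badSet p i) ≠ 0 := by
  let μ : Measure (ι → ℤ_[p]) := Measure.addHaarMeasure ⊤
  have : IsProbabilityMeasure μ := ⟨Measure.addHaarMeasure_self⟩
  intro hzero
  let K : ℝ := 2 * p ^ Fintype.card ι
  have hp : (0 : ℝ) < p := by exact_mod_cast (Fact.out : p.Prime).pos
  have hK : 0 < K := by positivity
  obtain ⟨u, δ, hδ, hcover, hη⟩ := exists_iUnion_closedBall_of_hausdorffMeasure_eq_zero hd hzero
    (η := min 1 (ENNReal.ofReal K)⁻¹) (by simp)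
  obtain ⟨hη₁, hηK⟩ := lt_min_iff.1 hη
  have hδ₁ (j : ℕ) : δ j ≤ 1 := by
    have hle := (ENNReal.le_tsum j).trans hη₁.le
    rw [ENNReal.ofReal_le_one] at hle
    exact not_lt.1 fun h => (Real.one_lt_rpow h hd).not_ge hle
  have hterm (j : ℕ) : ENNReal.ofReal (2 * δ j ^ (-(Fintype.card ι - d))) *
      μ (closedBall (u j) (δ j)) ≤ ENNReal.ofReal K * ENNReal.ofReal (δ j ^ d) := by
    grw [measure_closedBall_le μ (u j) (hδ j) (hδ₁ j)]
    have hδj := hδ j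
    rw [← ENNReal.ofReal_mul (by positivity), ← ENNReal.ofReal_mul hK.le, neg_sub,
      Real.rpow_sub hδj, Real.rpow_natCast]
    refine ENNReal.ofReal_le_ofReal (le_of_eq ?_)
    simp only [K, mul_pow]
    field_simp
  obtain ⟨x, hx, hxj⟩ := exists_mem_badSet_forall_notMem_closedBall μ hi hsum (sub_pos.2 hd')
    hδ hδ₁ (u := u) <| calc
      _ ≤ ∑' j, ENNReal.ofReal K * ENNReal.ofReal (δ j ^ d) := ENNReal.tsum_le_tsum hterm
      _ = ENNReal.ofReal K * ∑' j, ENNReal.ofReal (δ j ^ d) := ENNReal.tsum_mul_left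
      _ < 1 := by
        rw [mul_comm]
        exact ENNReal.mul_lt_of_lt_div (by simpa using hηK)
  obtain ⟨j, hj⟩ := mem_iUnion.1 (hcover hx)
  exact hxj j hj

end LowerBound

theorem card_le_dimH_badSet [Fintype ι] {i : ι → ℝ} (hi : ∀ s, 0 ≤ i s) (hsum : 1 ≤ ∑ s, i s) :
    (Fintype.card ι : ℝ≥0∞) ≤ dimH (badSet p i) := by
  borelize (ι → ℤ_[p])
  refine ENNReal.le_of_forall_nnreal_lt fun d hd => ?_
  rcases eq_zero_or_pos d with rfl | hd₀
  · simp
  · exact le_dimH_of_hausdorffMeasure_ne_zero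
      (hausdorffMeasure_badSet_ne_zero hi hsum hd₀ (by exact_mod_cast hd))

end Padic

end BadPadic

theorem dimH_badPadic_eq_general (p : ℕ) [Fact p.Prime] {ι : Type*} [Fintype ι] (i : ι → ℝ)
    (hi : ∀ s, 0 ≤ i s) (hsum : 1 ≤ ∑ s, i s) :
    dimH (BadPadic.badSet p i) = Fintype.card ι :=
  (BadPadic.dimH_le_card _).antisymm (BadPadic.card_le_dimH_badSet hi hsum)

/-- Let `p` be a prime. For any `N`-tuple of weights `(i₁, …, i_N)` with `i_s ≥ 0` and
`i₁ + ⋯ + i_N = 1`, the set `Bad_{ℤ_p}(i₁, …, i_N) ⊆ ℤ_p^N` — the set of points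
`x ∈ ℤ_p^N` for which there exists `c > 0` such that for every
`((r₁, …, r_N), q) ∈ ℤ^N × (ℤ ∖ {0})`,
`max{|q x_s - r_s|_p^(1/(1+i_s)) : 1 ≤ s ≤ N} ≥ c / max{|r₁|, …, |r_N|, |q|}` — has
Hausdorff dimension `N`.  (`ℤ_p^N` carries the sup metric coming from the `p`-adic metric.) -/
theorem dimH_badPadic_eq (p : ℕ) [Fact p.Prime] (N : ℕ) (i : Fin N → ℝ)
    (hi : ∀ s, 0 ≤ i s) (hsum : ∑ s, i s = 1) :
    dimH {x : Fin N → ℤ_[p] | ∃ c : ℝ, 0 < c ∧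
      ∀ (r : Fin N → ℤ) (q : ℤ), q ≠ 0 →
        ∃ s : Fin N,
          c / max |(q : ℝ)| (⨆ t : Fin N, |(r t : ℝ)|) ≤
            ‖(q : ℤ_[p]) * x s - (r s : ℤ_[p])‖ ^ (1 / (1 + i s))} = (N : ℝ≥0∞) := by
  exact (dimH_badPadic_eq_general p i hi hsum.ge).trans (by rw [Fintype.card_fin])
end
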